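/- arXiv:1507.02176 — 2 statements merged into one kernel-verified Lean document; each statement's English description precedes it below -/
import Mathlib

section
/- Under assumptions (H1)–(H5), the value functions V^ε are locally equibounded, and for t > 0 their upper weak semilimit does not depend on the fast variable, so one can write V̄(x,t) := (limsup^# V^ε)(x,y,t) for any y. Then V̄ is a viscosity subsolution of u_t + H̄(x,Du) = 0 on ℝ^N × (0,∞), and for every x0 ∈ ℝ^N one has limsup_{(x,t)→(x0,0), t>0} V̄(x,t) ≤ ū0(x0), where ū0(x) = inf_{y ∈ ℝ^M} u0(x,y). -/
open Set MeasureTheory Metric Filter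
open scoped RealInnerProductSpace Topology

noncomputable section

/-- `ℝ^n` with the Euclidean structure. -/
abbrev Euc (n : ℕ) : Type := EuclideanSpace ℝ (Fin n)

/-- A control: a measurable map with values in the control set `A`. -/
def IsControl {k : ℕ} (A : Set (Euc k)) (α : ℝ → Euc k) : Prop :=
  Measurable α ∧ ∀ t, α t ∈ A

/-- `(ξ, η)` is a trajectory of the controlled dynamics `(CD_ε)` for the control `α`:
this is the integral form, equivalent to `(ξ, η)` being locally absolutely continuous
with `ξ' = ε f(ξ, η, α)` and `η' = g(ξ, η, α)` a.e. on `[0, ∞)`. -/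
def IsTrajectory {N M k : ℕ}
    (f : Euc N → Euc M → Euc k → Euc N) (g : Euc N → Euc M → Euc k → Euc M)
    (ε : ℝ) (α : ℝ → Euc k) (ξ : ℝ → Euc N) (η : ℝ → Euc M) : Prop :=
  (∀ t, 0 ≤ t → IntervalIntegrable (fun s => f (ξ s) (η s) (α s)) volume 0 t) ∧
  (∀ t, 0 ≤ t → IntervalIntegrable (fun s => g (ξ s) (η s) (α s)) volume 0 t) ∧
  (∀ t, 0 ≤ t → ξ t = ξ 0 + ε • ∫ s in (0:ℝ)..t, f (ξ s) (η s) (α s)) ∧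
  (∀ t, 0 ≤ t → η t = η 0 + ∫ s in (0:ℝ)..t, g (ξ s) (η s) (α s))

/-- The value function `V^ε(x, y, t)` of the singularly perturbed optimal control problem. -/
def valueFun {N M k : ℕ} (A : Set (Euc k))
    (f : Euc N → Euc M → Euc k → Euc N) (g : Euc N → Euc M → Euc k → Euc M)
    (ℓ : Euc N → Euc M → Euc k → ℝ) (u0 : Euc N → Euc M → ℝ)
    (ε : ℝ) (x : Euc N) (y : Euc M) (t : ℝ) : ℝ :=
  sInf { v : ℝ | ∃ (α : ℝ → Euc k) (ξ : ℝ → Euc N) (η : ℝ → Euc M),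
    IsControl A α ∧ IsTrajectory f g ε α ξ η ∧ ξ 0 = x ∧ η 0 = y ∧
    IntervalIntegrable (fun s => ℓ (ξ s) (η s) (α s)) volume 0 (t / ε) ∧
    v = ε * (∫ s in (0:ℝ)..(t / ε), ℓ (ξ s) (η s) (α s)) + u0 (ξ (t / ε)) (η (t / ε)) }

/-- The Hamiltonian `H(x,y,p,q) = max_{a ∈ A} { -p·f(x,y,a) - q·g(x,y,a) - ℓ(x,y,a) }`. -/
def Ham {N M k : ℕ} (A : Set (Euc k))
    (f : Euc N → Euc M → Euc k → Euc N) (g : Euc N → Euc M → Euc k → Euc M)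
    (ℓ : Euc N → Euc M → Euc k → ℝ)
    (x : Euc N) (y : Euc M) (p : Euc N) (q : Euc M) : ℝ :=
  sSup ((fun a => -⟪p, f x y a⟫ - ⟪q, g x y a⟫ - ℓ x y a) '' A)

/-- Viscosity subsolution of the stationary equation `G(y, Du) = b` on `Ω`. -/
def IsVSubOn {m : ℕ} (G : Euc m → Euc m → ℝ) (b : ℝ) (Ω : Set (Euc m)) (u : Euc m → ℝ) : Prop :=
  UpperSemicontinuousOn u Ω ∧
  ∀ ψ : Euc m → ℝ, ContDiff ℝ 1 ψ → ∀ y ∈ Ω,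
    IsLocalMaxOn (fun z => u z - ψ z) Ω y → G y (gradient ψ y) ≤ b

/-- Viscosity supersolution of the stationary equation `G(y, Du) = b` on `Ω`. -/
def IsVSupOn {m : ℕ} (G : Euc m → Euc m → ℝ) (b : ℝ) (Ω : Set (Euc m)) (u : Euc m → ℝ) : Prop :=
  LowerSemicontinuousOn u Ω ∧
  ∀ ψ : Euc m → ℝ, ContDiff ℝ 1 ψ → ∀ y ∈ Ω,
    IsLocalMinOn (fun z => u z - ψ z) Ω y → b ≤ G y (gradient ψ y)

/-- The set of levels `b` for which `F(y, Du) = b` has a viscosity subsolution on `ℝ^m`. -/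
def subsolLevels {m : ℕ} (F : Euc m → Euc m → ℝ) : Set ℝ :=
  { b : ℝ | ∃ u : Euc m → ℝ, IsVSubOn F b univ u }

/-- The critical value of a Hamiltonian `F` on `ℝ^m`. -/
def critVal {m : ℕ} (F : Euc m → Euc m → ℝ) : ℝ :=
  sInf (subsolLevels F)

/-- The effective Hamiltonian `H̄(x, p)`. -/
def effH {N M k : ℕ} (A : Set (Euc k))
    (f : Euc N → Euc M → Euc k → Euc N) (g : Euc N → Euc M → Euc k → Euc M)
    (ℓ : Euc N → Euc M → Euc k → ℝ) (x : Euc N) (p : Euc N) : ℝ :=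
  critVal (fun (y q : Euc M) => Ham A f g ℓ x y p q)

/-- The frozen Hamiltonian `H₀(y, q) = H(x₀, y, p₀, q)` of the cell problem. -/
def cellH {N M k : ℕ} (A : Set (Euc k))
    (f : Euc N → Euc M → Euc k → Euc N) (g : Euc N → Euc M → Euc k → Euc M)
    (ℓ : Euc N → Euc M → Euc k → ℝ) (x0 p0 : Euc N) : Euc M → Euc M → ℝ :=
  fun y q => Ham A f g ℓ x0 y p0 q

/-- Viscosity subsolution of `u_t + G(x, D_x u) = 0` on `Ω ⊆ ℝ^n × ℝ`. -/
def IsParabSubOn {n : ℕ} (G : Euc n → Euc n → ℝ) (Ω : Set (Euc n × ℝ)) (u : Euc n × ℝ → ℝ) : Prop :=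
  UpperSemicontinuousOn u Ω ∧
  ∀ ψ : Euc n × ℝ → ℝ, ContDiff ℝ 1 ψ → ∀ z ∈ Ω,
    IsLocalMaxOn (fun w => u w - ψ w) Ω z →
    deriv (fun s => ψ (z.1, s)) z.2 + G z.1 (gradient (fun x => ψ (x, z.2)) z.1) ≤ 0

/-- Viscosity supersolution of `u_t + G(x, D_x u) = 0` on `Ω ⊆ ℝ^n × ℝ`. -/
def IsParabSupOn {n : ℕ} (G : Euc n → Euc n → ℝ) (Ω : Set (Euc n × ℝ)) (u : Euc n × ℝ → ℝ) : Prop :=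
  LowerSemicontinuousOn u Ω ∧
  ∀ ψ : Euc n × ℝ → ℝ, ContDiff ℝ 1 ψ → ∀ z ∈ Ω,
    IsLocalMinOn (fun w => u w - ψ w) Ω z →
    0 ≤ deriv (fun s => ψ (z.1, s)) z.2 + G z.1 (gradient (fun x => ψ (x, z.2)) z.1)

/-- Viscosity subsolution of `u_t + H(x, y, D_x u, D_y u / ε) = 0` on `Ω ⊆ (ℝ^N × ℝ^M) × ℝ`. -/
def IsHJSubOn {N M : ℕ} (Hm : Euc N → Euc M → Euc N → Euc M → ℝ) (ε : ℝ)
    (Ω : Set ((Euc N × Euc M) × ℝ)) (u : (Euc N × Euc M) × ℝ → ℝ) : Prop :=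
  UpperSemicontinuousOn u Ω ∧
  ∀ ψ : (Euc N × Euc M) × ℝ → ℝ, ContDiff ℝ 1 ψ → ∀ z ∈ Ω,
    IsLocalMaxOn (fun w => u w - ψ w) Ω z →
    deriv (fun s => ψ (z.1, s)) z.2 +
      Hm z.1.1 z.1.2 (gradient (fun x => ψ ((x, z.1.2), z.2)) z.1.1)
        (ε⁻¹ • gradient (fun y => ψ ((z.1.1, y), z.2)) z.1.2) ≤ 0

/-- Viscosity supersolution of `u_t + H(x, y, D_x u, D_y u / ε) = 0` on `Ω`. -/
def IsHJSupOn {N M : ℕ} (Hm : Euc N → Euc M → Euc N → Euc M → ℝ) (ε : ℝ)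
    (Ω : Set ((Euc N × Euc M) × ℝ)) (u : (Euc N × Euc M) × ℝ → ℝ) : Prop :=
  LowerSemicontinuousOn u Ω ∧
  ∀ ψ : (Euc N × Euc M) × ℝ → ℝ, ContDiff ℝ 1 ψ → ∀ z ∈ Ω,
    IsLocalMinOn (fun w => u w - ψ w) Ω z →
    0 ≤ deriv (fun s => ψ (z.1, s)) z.2 +
      Hm z.1.1 z.1.2 (gradient (fun x => ψ ((x, z.1.2), z.2)) z.1.1)
        (ε⁻¹ • gradient (fun y => ψ ((z.1.1, y), z.2)) z.1.2)

/-- The upper weak semilimit `(limsup^# V^ε)(z)`. -/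
def upperLim {Z : Type*} [TopologicalSpace Z] (V : ℝ → Z → ℝ) (z : Z) : ℝ :=
  sSup { l : ℝ | ∃ (e : ℕ → ℝ) (w : ℕ → Z), (∀ n, 0 < e n) ∧
    Tendsto e atTop (𝓝 0) ∧ Tendsto w atTop (𝓝 z) ∧
    l = Filter.limsup (fun n => V (e n) (w n)) atTop }

/-- The lower weak semilimit `(liminf_# V^ε)(z)`. -/
def lowerLim {Z : Type*} [TopologicalSpace Z] (V : ℝ → Z → ℝ) (z : Z) : ℝ :=
  sInf { l : ℝ | ∃ (e : ℕ → ℝ) (w : ℕ → Z), (∀ n, 0 < e n) ∧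
    Tendsto e atTop (𝓝 0) ∧ Tendsto w atTop (𝓝 z) ∧
    l = Filter.liminf (fun n => V (e n) (w n)) atTop }

/-- The lower semicontinuous envelope `φ_#`. -/
def lscEnvelope {X : Type*} [TopologicalSpace X] (φ : X → ℝ) (x : X) : ℝ :=
  Filter.liminf φ (𝓝 x)

/-- Local equiboundedness of the family of value functions. -/
def LocEquibounded {N M : ℕ} (V : ℝ → Euc N → Euc M → ℝ → ℝ) : Prop :=
  ∀ C : Set (Euc N × Euc M × ℝ), Bornology.IsBounded C →
    ∃ Mb : ℝ, ∀ ε : ℝ, 0 < ε → ∀ z ∈ C, 0 ≤ z.2.2 → |V ε z.1 z.2.1 z.2.2| ≤ Mb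

/-- The sublevel set `Z_b(y)` of a Hamiltonian. -/
def sublevel {m : ℕ} (G : Euc m → Euc m → ℝ) (b : ℝ) (y : Euc m) : Set (Euc m) :=
  { q | G y q ≤ b }

/-- The support function `σ_b(y, v)` of the sublevel `Z_b(y)`. -/
def suppFn {m : ℕ} (G : Euc m → Euc m → ℝ) (b : ℝ) (y v : Euc m) : ℝ :=
  sSup ((fun q => ⟪q, v⟫) '' sublevel G b y)

/-- The intrinsic length of a curve (Lipschitz curves are differentiable a.e.). -/
def intrinsicLen {m : ℕ} (G : Euc m → Euc m → ℝ) (b : ℝ) (ξ : ℝ → Euc m) : ℝ :=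
  ∫ s in (0:ℝ)..1, suppFn G b (ξ s) (deriv ξ s)

/-- Admissible (Lipschitz) curves on `[0,1]` joining `y₁` to `y₂`. -/
def IsAdmCurve {m : ℕ} (ξ : ℝ → Euc m) (y₁ y₂ : Euc m) : Prop :=
  (∃ Kl : NNReal, LipschitzWith Kl ξ) ∧ ξ 0 = y₁ ∧ ξ 1 = y₂

/-- The intrinsic distance `S_b(y₁, y₂)`. -/
def intrinsicDist {m : ℕ} (G : Euc m → Euc m → ℝ) (b : ℝ) (y₁ y₂ : Euc m) : ℝ :=
  sInf { L : ℝ | ∃ ξ : ℝ → Euc m, IsAdmCurve ξ y₁ y₂ ∧ L = intrinsicLen G b ξ }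

/-- The weighted intrinsic length associated with a weight `h`. -/
def wIntrinsicLen {m : ℕ} (G : Euc m → Euc m → ℝ) (b : ℝ) (h : Euc m → ℝ) (ξ : ℝ → Euc m) : ℝ :=
  ∫ s in (0:ℝ)..1, h (ξ s) * suppFn G b (ξ s) (deriv ξ s)

/-- The weighted intrinsic distance `S_b^h(y₁, y₂)`. -/
def wIntrinsicDist {m : ℕ} (G : Euc m → Euc m → ℝ) (b : ℝ) (h : Euc m → ℝ) (y₁ y₂ : Euc m) : ℝ :=
  sInf { L : ℝ | ∃ ξ : ℝ → Euc m, IsAdmCurve ξ y₁ y₂ ∧ L = wIntrinsicLen G b h ξ }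

/-- The intrinsic critical distance `S(y₁, y₂)` of the cell problem at `(x₀, p₀)`. -/
def cellS {N M k : ℕ} (A : Set (Euc k))
    (f : Euc N → Euc M → Euc k → Euc N) (g : Euc N → Euc M → Euc k → Euc M)
    (ℓ : Euc N → Euc M → Euc k → ℝ) (x0 p0 : Euc N) (y₁ y₂ : Euc M) : ℝ :=
  intrinsicDist (cellH A f g ℓ x0 p0) (effH A f g ℓ x0 p0) y₁ y₂

/-- The Aubry set of `G` at the level `c`: points near which no global viscosity
subsolution of `G(y, Du) = c` is strict. -/
def AubrySet {m : ℕ} (G : Euc m → Euc m → ℝ) (c : ℝ) : Set (Euc m) :=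
  { y₀ | ¬ ∃ (u : Euc m → ℝ) (δ : ℝ) (U : Set (Euc m)),
      IsVSubOn G c univ u ∧ 0 < δ ∧ IsOpen U ∧ y₀ ∈ U ∧ IsVSubOn G (c - δ) U u }

end

open Set MeasureTheory Metric Filter
open scoped RealInnerProductSpace Topology

/-! ### Global existence for Lipschitz autonomous ODEs -/

section ODE
set_option linter.unusedSectionVars false
variable {E : Type*} [NormedAddCommGroup E] [NormedSpace ℝ E] [CompleteSpace E]

/-- `γ` solves the ODE on `[0,T]` in integral form. -/
def SolOn (v : E → E) (z : E) (T : ℝ) (γ : ℝ → E) : Prop :=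
  Continuous γ ∧ ∀ t, 0 ≤ t → t ≤ T → γ t = z + ∫ s in (0:ℝ)..t, v (γ s)

lemma SolOn.zero {v : E → E} {z : E} {T : ℝ} {γ : ℝ → E} (hT : 0 ≤ T) (h : SolOn v z T γ) :
    γ 0 = z := by
  simpa using h.2 0 le_rfl hT

lemma solOn_local {v : E → E} {K : NNReal} (hv : LipschitzWith K v) (z : E) :
    ∃ γ, SolOn v z (1 / (K + 1)) γ := by
  have hh : (0:ℝ) ≤ 1 / (K + 1) := by positivity
  let a : NNReal := ‖v z‖₊ + 1
  let L : NNReal := ‖v z‖₊ + K * a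
  have hPL : IsPicardLindelof (fun _ => v) (tmin := 0) (tmax := 1 / (K + 1))
      ⟨0, le_rfl, hh⟩ z a 0 L K := by
    refine ⟨fun t _ => hv.lipschitzOnWith, fun x _ => continuousOn_const, ?_, ?_⟩
    · intro t _ x hx
      have h1 := hv.dist_le_mul x z
      rw [mem_closedBall] at hx
      have h2 : ‖v x‖ ≤ ‖v z‖ + dist (v x) (v z) := by
        rw [dist_eq_norm]
        calc ‖v x‖ = ‖v z + (v x - v z)‖ := by congr 1; abel
          _ ≤ _ := norm_add_le _ _
      have h3 : (K:ℝ) * dist x z ≤ K * a := by gcongr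
      change ‖v x‖ ≤ ((‖v z‖₊ + K * a : NNReal) : ℝ)
      push_cast
      linarith
    · simp only [sub_zero, sub_self, NNReal.coe_zero]
      rw [max_eq_left hh, mul_one_div, div_le_iff₀ (by positivity)]
      simp only [L, a]
      push_cast
      have := norm_nonneg (v z)
      have hK := K.2
      nlinarith [norm_nonneg (v z), coe_nnnorm (v z)]
  obtain ⟨α, hα⟩ := ODE.FunSpace.exists_isFixedPt_next hPL (x := z) (by simp)
  rw [ODE.FunSpace.isFixedPt_next_iff] at hα
  refine ⟨α.compProj, α.continuous_compProj, fun t h0 h1 => ?_⟩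
  have := hα ⟨t, h0, h1⟩
  rw [ODE.FunSpace.compProj_of_mem ⟨h0, h1⟩, this, ODE.picard_apply]

lemma SolOn.glue {v : E → E} (hv : Continuous v) {z : E} {h T : ℝ} (hh : 0 ≤ h) (hT : 0 ≤ T)
    {γ₁ γ₂ : ℝ → E} (h1 : SolOn v z h γ₁) (h2 : SolOn v (γ₁ h) T γ₂) :
    SolOn v z (h + T) (fun t => if t ≤ h then γ₁ t else γ₂ (t - h)) := by
  have e0 := h2.zero hT
  have hc : Continuous (fun t => if t ≤ h then γ₁ t else γ₂ (t - h)) := by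
    refine Continuous.if_le h1.1 (h2.1.comp (by fun_prop)) continuous_id continuous_const ?_
    intro x hx
    subst hx
    simp [e0]
  refine ⟨hc, fun t h0 ht => ?_⟩
  have key : ∀ t, 0 ≤ t → t ≤ h →
      (∫ s in (0:ℝ)..t, v (if s ≤ h then γ₁ s else γ₂ (s - h))) = ∫ s in (0:ℝ)..t, v (γ₁ s) := by
    intro t h0 ht
    apply intervalIntegral.integral_congr
    intro s hs
    rw [uIcc_of_le h0] at hs
    simp [hs.2.trans ht]
  by_cases hth : t ≤ h
  · simp only [hth, if_true]
    rw [key t h0 hth, ← h1.2 t h0 hth]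
  · simp only [hth, if_false]
    push Not at hth
    have hvc : Continuous fun s => v (if s ≤ h then γ₁ s else γ₂ (s - h)) := hv.comp hc
    rw [← intervalIntegral.integral_add_adjacent_intervals (b := h)
      (hvc.intervalIntegrable _ _) (hvc.intervalIntegrable _ _), key h hh le_rfl,
      ← add_assoc, ← h1.2 h hh le_rfl, h2.2 (t - h) (by linarith) (by linarith)]
    congr 1
    have := intervalIntegral.integral_comp_sub_right (a := h) (b := t) (fun s => v (γ₂ s)) h
    rw [sub_self] at this
    rw [← this]
    apply intervalIntegral.integral_congr_ae
    refine Eventually.of_forall fun s hs => ?_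
    rw [uIoc_of_le hth.le] at hs
    simp [not_le.2 hs.1]

lemma SolOn.mono {v : E → E} {z : E} {S T : ℝ} {γ : ℝ → E} (h : SolOn v z T γ) (hS : S ≤ T) :
    SolOn v z S γ := ⟨h.1, fun t h0 h1 => h.2 t h0 (h1.trans hS)⟩

lemma SolOn.hasDeriv {v : E → E} (hv : Continuous v) {z : E} {T : ℝ} {γ : ℝ → E}
    (h : SolOn v z T γ) {t : ℝ} (h0 : 0 ≤ t) (h1 : t < T) :
    HasDerivWithinAt γ (v (γ t)) (Ici t) t := by
  have hd : HasDerivAt (fun t => z + ∫ s in (0:ℝ)..t, v (γ s)) (v (γ t)) t :=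
    (intervalIntegral.integral_hasDerivAt_right ((hv.comp h.1).intervalIntegrable _ _)
      ((hv.comp h.1).stronglyMeasurableAtFilter _ _) (hv.comp h.1).continuousAt).const_add z
  refine hd.hasDerivWithinAt.congr_of_eventuallyEq ?_ (h.2 t h0 h1.le)
  filter_upwards [self_mem_nhdsWithin, nhdsWithin_le_nhds (Iio_mem_nhds h1)] with s hs hs'
  exact h.2 s (h0.trans hs) (le_of_lt hs')

lemma SolOn.unique {v : E → E} {K : NNReal} (hv : LipschitzWith K v) {z : E} {T : ℝ}
    {γ₁ γ₂ : ℝ → E} (h1 : SolOn v z T γ₁) (h2 : SolOn v z T γ₂) {t : ℝ} (h0 : 0 ≤ t)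
    (hT : t ≤ T) : γ₁ t = γ₂ t := by
  have := dist_le_of_trajectories_ODE (a := 0) (b := T) (δ := 0) (f := γ₁) (g := γ₂)
    (fun _ : ℝ => hv) h1.1.continuousOn
    (fun t ht => h1.hasDeriv hv.continuous ht.1 ht.2) h2.1.continuousOn
    (fun t ht => h2.hasDeriv hv.continuous ht.1 ht.2)
    (by rw [h1.zero (h0.trans hT), h2.zero (h0.trans hT), dist_self]) t ⟨h0, hT⟩
  rw [zero_mul] at this
  exact dist_le_zero.1 this

lemma solOn_nat {v : E → E} {K : NNReal} (hv : LipschitzWith K v) (n : ℕ) :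
    ∀ z : E, ∃ γ, SolOn v z (n * (1 / (K + 1))) γ := by
  induction n with
  | zero =>
    intro z
    obtain ⟨γ, h⟩ := solOn_local hv z
    exact ⟨γ, h.mono (by simp; positivity)⟩
  | succ n ih =>
    intro z
    obtain ⟨γ, h⟩ := solOn_local hv z
    obtain ⟨γ', h'⟩ := ih (γ (1 / (K + 1)))
    refine ⟨_, (h.glue hv.continuous (by positivity) (by positivity) h').mono ?_⟩
    push_cast
    linarith

/-- Global forward solution, extended by the initial value to negative times. -/
def IsSol (v : E → E) (z : E) (γ : ℝ → E) : Prop :=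
  Continuous γ ∧ (∀ t, t ≤ 0 → γ t = z) ∧ ∀ t, 0 ≤ t → γ t = z + ∫ s in (0:ℝ)..t, v (γ s)

lemma exists_isSol {v : E → E} {K : NNReal} (hv : LipschitzWith K v) (z : E) :
    ∃ γ, IsSol v z γ := by
  have hex : ∀ n : ℕ, ∃ γ, SolOn v z n γ := by
    intro n
    obtain ⟨m, hm⟩ := exists_nat_ge ((n:ℝ) * (K + 1))
    obtain ⟨γ, h⟩ := solOn_nat hv m z
    refine ⟨γ, h.mono ?_⟩
    rw [mul_one_div, le_div_iff₀ (by positivity)]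
    exact hm
  choose G hG using hex
  have huniq : ∀ (n m : ℕ) (t : ℝ), 0 ≤ t → t ≤ n → t ≤ m → G n t = G m t := by
    intro n m t h0 hn hm
    rcases le_total (n:ℝ) m with h | h
    · exact SolOn.unique hv (hG n) ((hG m).mono h) h0 hn
    · exact SolOn.unique hv ((hG n).mono h) (hG m) h0 hm
  let γ : ℝ → E := fun t => G ⌈max t 0⌉₊ (max t 0)
  have hγ : ∀ (n : ℕ) (t : ℝ), max t 0 ≤ n → γ t = G n (max t 0) := by
    intro n t ht
    exact huniq _ _ _ (le_max_right _ _) (Nat.le_ceil _) ht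
  refine ⟨γ, ?_, ?_, ?_⟩
  · rw [continuous_iff_continuousAt]
    intro t
    obtain ⟨n, hn⟩ := exists_nat_gt (max t 0)
    have : Continuous fun t : ℝ => G n (max t 0) := (hG n).1.comp (by fun_prop)
    refine this.continuousAt.congr ?_
    have : Continuous fun t : ℝ => max t 0 := by fun_prop
    filter_upwards [this.continuousAt.eventually (Iio_mem_nhds hn)] with s hs
    exact (hγ n s (le_of_lt hs)).symm
  · intro t ht
    rw [hγ 0 t (by simp [ht]), max_eq_right ht]
    exact (hG 0).zero (by simp)
  · intro t ht
    obtain ⟨n, hn⟩ := exists_nat_gt t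
    rw [hγ n t (by simp [ht, hn.le]), max_eq_left ht, (hG n).2 t ht hn.le]
    congr 1
    apply intervalIntegral.integral_congr
    intro s hs
    rw [uIcc_of_le ht] at hs
    simp only
    rw [hγ n s (by simp [hs.2.trans hn.le]), max_eq_left hs.1]

lemma IsSol.zero {v : E → E} {z : E} {γ : ℝ → E} (h : IsSol v z γ) : γ 0 = z := h.2.1 0 le_rfl

lemma IsSol.solOn {v : E → E} {z : E} {γ : ℝ → E} (h : IsSol v z γ) (T : ℝ) : SolOn v z T γ :=
  ⟨h.1, fun t h0 _ => h.2.2 t h0⟩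

lemma IsSol.hasDeriv {v : E → E} (hv : Continuous v) {z : E} {γ : ℝ → E}
    (h : IsSol v z γ) {t : ℝ} (h0 : 0 ≤ t) :
    HasDerivWithinAt γ (v (γ t)) (Ici t) t :=
  (h.solOn (t + 1)).hasDeriv hv h0 (by linarith)

/-- Stability of solutions with respect to the data. -/
lemma IsSol.dist_le {v w : E → E} {K : NNReal} (hv : LipschitzWith K v) (hw : Continuous w)
    {δ : ℝ} (hvw : ∀ z, dist (w z) (v z) ≤ δ) {z z' : E} {γ γ' : ℝ → E} (h : IsSol v z γ)
    (h' : IsSol w z' γ') {t : ℝ} (ht : 0 ≤ t) :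
    dist (γ' t) (γ t) ≤ gronwallBound (dist z' z) K δ t := by
  have := dist_le_of_approx_trajectories_ODE (a := 0) (b := t) (δ := dist z' z) (f := γ') (g := γ)
    (εf := δ) (εg := 0) (v := fun _ => v)
    (fun _ : ℝ => hv) h'.1.continuousOn
    (fun s hs => h'.hasDeriv hw hs.1) (fun s _ => hvw _) h.1.continuousOn
    (fun s hs => h.hasDeriv hv.continuous hs.1) (fun s _ => by simp)
    (by rw [h.zero, h'.zero]) t ⟨ht, le_rfl⟩
  simpa using this

/-- Short-time bound on the displacement. -/
lemma IsSol.short {v : E → E} {K : NNReal} (hv : LipschitzWith K v) {z : E} {γ : ℝ → E}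
    (h : IsSol v z γ) {G : ℝ} (hG : ‖v z‖ ≤ G) {t : ℝ} (ht : 0 ≤ t) (htK : K * t ≤ 1 / 2) :
    ‖γ t - z‖ ≤ 2 * G * t := by
  obtain ⟨m, hm, hmax⟩ := isCompact_Icc.exists_isMaxOn (nonempty_Icc.2 ht)
    ((h.1.sub continuous_const).norm (f := fun s => γ s - z)).continuousOn
  set D := ‖γ m - z‖
  have hD0 : 0 ≤ D := norm_nonneg _
  have hs : ∀ s ∈ Icc 0 t, ‖γ s - z‖ ≤ s * (G + K * D) := by
    intro s hs
    rw [h.2.2 s hs.1, add_sub_cancel_left]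
    have := intervalIntegral.norm_integral_le_of_norm_le_const (a := 0) (b := s)
      (f := fun s => v (γ s)) (C := G + K * D) ?_
    · simpa [abs_of_nonneg hs.1, mul_comm] using this
    · intro r hr
      rw [uIoc_of_le hs.1] at hr
      have h1 := hv.dist_le_mul (γ r) z
      rw [dist_eq_norm, dist_eq_norm] at h1
      have h2 : ‖γ r - z‖ ≤ D := hmax (show r ∈ Icc 0 t from ⟨hr.1.le, hr.2.trans hs.2⟩)
      have h3 : (K:ℝ) * ‖γ r - z‖ ≤ K * D := by gcongr
      calc ‖v (γ r)‖ = ‖v z + (v (γ r) - v z)‖ := by congr 1; abel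
          _ ≤ ‖v z‖ + ‖v (γ r) - v z‖ := norm_add_le _ _
          _ ≤ _ := by linarith
  have hG0 : 0 ≤ G := (norm_nonneg _).trans hG
  have h1 := hs m hm
  have h2 : m * (G + K * D) ≤ t * (G + K * D) := by
    have := hm.2
    gcongr
  have h3 : D ≤ 2 * G * t := by
    have : D ≤ t * G + (K * t) * D := by
      calc D ≤ _ := h1
        _ ≤ _ := h2
        _ = _ := by ring
    nlinarith
  have h4 : ‖γ t - z‖ ≤ D := hmax (show t ∈ Icc 0 t from ⟨ht, le_rfl⟩)
  linarith

end ODE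

open Set MeasureTheory Metric Filter
open scoped RealInnerProductSpace Topology

/-! ### The controlled system -/

/-- The standing hypotheses on the dynamics. -/
structure DynHyp {N M k : ℕ} (A : Set (Euc k))
    (f : Euc N → Euc M → Euc k → Euc N) (g : Euc N → Euc M → Euc k → Euc M)
    (L0 Q0 : ℝ) : Prop where
  cpt : IsCompact A
  ne : A.Nonempty
  L0pos : 0 < L0
  Q0pos : 0 < Q0
  fLip : ∀ (x₁ x₂ : Euc N) (y₁ y₂ : Euc M), ∀ a ∈ A,
      ‖f x₁ y₁ a - f x₂ y₂ a‖ ≤ L0 * (‖x₁ - x₂‖ + ‖y₁ - y₂‖)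
  gLip : ∀ (x₁ x₂ : Euc N) (y₁ y₂ : Euc M), ∀ a ∈ A,
      ‖g x₁ y₁ a - g x₂ y₂ a‖ ≤ L0 * (‖x₁ - x₂‖ + ‖y₁ - y₂‖)
  fBdd : ∀ x y, ∀ a ∈ A, ‖f x y a‖ ≤ Q0
  ctrl : ∀ K : Set (Euc N × Euc M), IsCompact K → ∃ r > 0, ∀ z ∈ K,
      Metric.ball (0 : Euc M) r ⊆ closure (convexHull ℝ ((fun a => g z.1 z.2 a) '' A))

section System
variable {N M k : ℕ} {A : Set (Euc k)}
    {f : Euc N → Euc M → Euc k → Euc N} {g : Euc N → Euc M → Euc k → Euc M}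
    {L0 Q0 : ℝ}

/-- The vector field for a constant control. -/
def vf (f : Euc N → Euc M → Euc k → Euc N) (g : Euc N → Euc M → Euc k → Euc M)
    (ε : ℝ) (a : Euc k) : Euc N × Euc M → Euc N × Euc M :=
  fun z => (ε • f z.1 z.2 a, g z.1 z.2 a)

/-- Its Lipschitz constant. -/
noncomputable def Kc (L0 ε : ℝ) : NNReal := Real.toNNReal (2 * L0 * (|ε| + 1))

lemma Kc_coe (H : DynHyp A f g L0 Q0) (ε : ℝ) : (Kc L0 ε : ℝ) = 2 * L0 * (|ε| + 1) := by
  have := H.L0pos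
  rw [Kc, Real.coe_toNNReal _ (by positivity)]

lemma Kc_pos (H : DynHyp A f g L0 Q0) (ε : ℝ) : (0 : ℝ) < Kc L0 ε := by
  have := H.L0pos
  rw [Kc_coe H]; positivity

lemma sum_le_two_norm (z : Euc N × Euc M) : ‖z.1‖ + ‖z.2‖ ≤ 2 * ‖z‖ := by
  have := norm_fst_le z
  have := norm_snd_le z
  linarith

lemma vf_lip (H : DynHyp A f g L0 Q0) (ε : ℝ) {a : Euc k} (ha : a ∈ A) :
    LipschitzWith (Kc L0 ε) (vf f g ε a) := by
  refine LipschitzWith.of_dist_le_mul fun z w => ?_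
  rw [Kc_coe H, dist_eq_norm, dist_eq_norm]
  have hL := H.L0pos
  have h1 := H.fLip z.1 w.1 z.2 w.2 a ha
  have h2 := H.gLip z.1 w.1 z.2 w.2 a ha
  have h3 := sum_le_two_norm (z - w)
  simp only [Prod.fst_sub, Prod.snd_sub] at h3
  have h4 : L0 * (‖z.1 - w.1‖ + ‖z.2 - w.2‖) ≤ L0 * (2 * ‖z - w‖) := by gcongr
  have h5 : 0 ≤ L0 * (2 * ‖z - w‖) := by positivity
  have hε := abs_nonneg ε
  rw [Prod.norm_def]
  apply max_le
  · simp only [vf, Prod.fst_sub]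
    rw [← smul_sub, norm_smul, Real.norm_eq_abs]
    have : |ε| * ‖f z.1 z.2 a - f w.1 w.2 a‖ ≤ |ε| * (L0 * (2 * ‖z - w‖)) := by
      gcongr; linarith
    nlinarith
  · simp only [vf, Prod.snd_sub]
    nlinarith

lemma f_cont (H : DynHyp A f g L0 Q0) {a : Euc k} (ha : a ∈ A) :
    Continuous fun z : Euc N × Euc M => f z.1 z.2 a := by
  have := (continuous_fst.comp (vf_lip H 1 ha).continuous)
  simpa [vf, Function.comp_def] using this

lemma g_cont (H : DynHyp A f g L0 Q0) {a : Euc k} (ha : a ∈ A) :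
    Continuous fun z : Euc N × Euc M => g z.1 z.2 a := by
  have := (continuous_snd.comp (vf_lip H 1 ha).continuous)
  simpa [vf, Function.comp_def] using this

/-- The flow for a constant control. -/
noncomputable def sol (f : Euc N → Euc M → Euc k → Euc N) (g : Euc N → Euc M → Euc k → Euc M)
    (ε : ℝ) (a : Euc k) (z : Euc N × Euc M) : ℝ → Euc N × Euc M :=
  Classical.epsilon (IsSol (vf f g ε a) z)

lemma sol_spec (H : DynHyp A f g L0 Q0) (ε : ℝ) {a : Euc k} (ha : a ∈ A) (z : Euc N × Euc M) :
    IsSol (vf f g ε a) z (sol f g ε a z) :=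
  Classical.epsilon_spec (exists_isSol (vf_lip H ε ha) z)

lemma sol_cont_time (H : DynHyp A f g L0 Q0) (ε : ℝ) {a : Euc k} (ha : a ∈ A)
    (z : Euc N × Euc M) : Continuous (sol f g ε a z) := (sol_spec H ε ha z).1

lemma sol_fst (H : DynHyp A f g L0 Q0) (ε : ℝ) {a : Euc k} (ha : a ∈ A)
    (z : Euc N × Euc M) {t : ℝ} (ht : 0 ≤ t) : (sol f g ε a z t).1 =
      z.1 + ε • ∫ s in (0:ℝ)..t, f (sol f g ε a z s).1 (sol f g ε a z s).2 a := by
  have hs := sol_spec H ε ha z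
  have hc : Continuous fun s => vf f g ε a (sol f g ε a z s) :=
    (vf_lip H ε ha).continuous.comp hs.1
  have h1 := congrArg Prod.fst (hs.2.2 t ht)
  have h2 := (ContinuousLinearMap.fst ℝ (Euc N) (Euc M)).intervalIntegral_comp_comm
    (hc.intervalIntegrable (μ := volume) 0 t)
  rw [h1, Prod.fst_add]
  simp only [ContinuousLinearMap.coe_fst'] at h2
  rw [← h2]
  simp only [vf]
  rw [intervalIntegral.integral_smul]

lemma sol_snd (H : DynHyp A f g L0 Q0) (ε : ℝ) {a : Euc k} (ha : a ∈ A)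
    (z : Euc N × Euc M) {t : ℝ} (ht : 0 ≤ t) : (sol f g ε a z t).2 =
      z.2 + ∫ s in (0:ℝ)..t, g (sol f g ε a z s).1 (sol f g ε a z s).2 a := by
  have hs := sol_spec H ε ha z
  have hc : Continuous fun s => vf f g ε a (sol f g ε a z s) :=
    (vf_lip H ε ha).continuous.comp hs.1
  have h1 := congrArg Prod.snd (hs.2.2 t ht)
  have h2 := (ContinuousLinearMap.snd ℝ (Euc N) (Euc M)).intervalIntegral_comp_comm
    (hc.intervalIntegrable (μ := volume) 0 t)
  rw [h1, Prod.snd_add]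
  simp only [ContinuousLinearMap.coe_snd'] at h2
  rw [← h2]
  simp only [vf]

lemma sol_fst_le (H : DynHyp A f g L0 Q0) (ε : ℝ) {a : Euc k} (ha : a ∈ A)
    (z : Euc N × Euc M) {t : ℝ} (ht : 0 ≤ t) :
    ‖(sol f g ε a z t).1 - z.1‖ ≤ |ε| * Q0 * t := by
  rw [sol_fst H ε ha z ht, add_sub_cancel_left, norm_smul, Real.norm_eq_abs, mul_assoc]
  gcongr
  have := intervalIntegral.norm_integral_le_of_norm_le_const (a := 0) (b := t)
      (f := fun s => f (sol f g ε a z s).1 (sol f g ε a z s).2 a) (C := Q0)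
      (fun s _ => H.fBdd _ _ _ ha)
  simpa [abs_of_nonneg ht] using this

lemma sol_cont (H : DynHyp A f g L0 Q0) {a : Euc k} (ha : a ∈ A) :
    Continuous fun p : ℝ × (Euc N × Euc M) × ℝ => sol f g p.1 a p.2.1 p.2.2 := by
  rw [continuous_iff_continuousAt]
  rintro ⟨ε1, z1, t1⟩
  have hK := Kc_pos H ε1
  set K := Kc L0 ε1
  have hmain : ∀ p : ℝ × (Euc N × Euc M) × ℝ, dist (sol f g p.1 a p.2.1 p.2.2)
      (sol f g ε1 a z1 t1) ≤ dist p.2.1 z1 * Real.exp (K * |p.2.2|) +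
        (|p.1 - ε1| * Q0) / K * (Real.exp (K * |p.2.2|) - 1) +
        dist (sol f g ε1 a z1 p.2.2) (sol f g ε1 a z1 t1) := by
    rintro ⟨ε, z, t⟩
    simp only
    refine (dist_triangle _ (sol f g ε1 a z1 t) _).trans ?_
    gcongr
    rcases le_total 0 t with ht | ht
    · have := (sol_spec H ε1 ha z1).dist_le (vf_lip H ε1 ha) (vf_lip H ε ha).continuous
        (δ := |ε - ε1| * Q0) ?_ (sol_spec H ε ha z) ht
      · rw [gronwallBound_of_K_ne_0 hK.ne'] at this
        rwa [abs_of_nonneg ht]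
      · intro z
        rw [dist_eq_norm, Prod.norm_def]
        have := H.Q0pos
        apply max_le
        · simp only [vf, Prod.fst_sub]
          rw [← sub_smul, norm_smul, Real.norm_eq_abs]
          gcongr
          exact H.fBdd _ _ _ ha
        · simp only [vf, Prod.snd_sub, sub_self, norm_zero]
          positivity
    · rw [(sol_spec H ε ha z).2.1 t ht, (sol_spec H ε1 ha z1).2.1 t ht]
      have h1 : 1 ≤ Real.exp (K * |t|) := Real.one_le_exp (by positivity)
      have := H.Q0pos
      have h2 : 0 ≤ (|ε - ε1| * Q0) / K * (Real.exp (K * |t|) - 1) :=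
        mul_nonneg (by positivity) (by linarith)
      have h3 : dist z z1 * 1 ≤ dist z z1 * Real.exp (K * |t|) := by gcongr
      linarith
  rw [ContinuousAt, tendsto_iff_dist_tendsto_zero]
  refine squeeze_zero (fun _ => dist_nonneg) hmain ?_
  have hs := sol_cont_time H ε1 ha z1
  have : Continuous fun p : ℝ × (Euc N × Euc M) × ℝ =>
      dist p.2.1 z1 * Real.exp (K * |p.2.2|) +
        (|p.1 - ε1| * Q0) / K * (Real.exp (K * |p.2.2|) - 1) +
        dist (sol f g ε1 a z1 p.2.2) (sol f g ε1 a z1 t1) := by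
    fun_prop
  have h := this.tendsto (ε1, z1, t1)
  simpa using h

/-! ### Words of constant controls -/

/-- End point of the trajectory driven by a word. -/
noncomputable def wEnd (f : Euc N → Euc M → Euc k → Euc N) (g : Euc N → Euc M → Euc k → Euc M)
    (ε : ℝ) : List (A × NNReal) → Euc N × Euc M → Euc N × Euc M
  | [], z => z
  | l :: w, z => wEnd f g ε w (sol f g ε l.1 z l.2)

/-- Total duration of a word. -/
noncomputable def wDur : List (A × NNReal) → ℝ
  | [] => 0
  | l :: w => l.2 + wDur w

/-- Cost along the trajectory driven by a word. -/
noncomputable def wCost (f : Euc N → Euc M → Euc k → Euc N) (g : Euc N → Euc M → Euc k → Euc M)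
    (L : A → Euc N × Euc M → ℝ) (ε : ℝ) : List (A × NNReal) → Euc N × Euc M → ℝ
  | [], _ => 0
  | l :: w, z => (∫ s in (0:ℝ)..l.2, L l.1 (sol f g ε l.1 z s)) +
      wCost f g L ε w (sol f g ε l.1 z l.2)

/-- The trajectory driven by the word stays in `K`. -/
def wIn (f : Euc N → Euc M → Euc k → Euc N) (g : Euc N → Euc M → Euc k → Euc M)
    (K : Set (Euc N × Euc M)) (ε : ℝ) : List (A × NNReal) → Euc N × Euc M → Prop
  | [], z => z ∈ K
  | l :: w, z => (∀ s ∈ Icc (0:ℝ) l.2, sol f g ε l.1 z s ∈ K) ∧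
      wIn f g K ε w (sol f g ε l.1 z l.2)

lemma wDur_nonneg (w : List (A × NNReal)) : 0 ≤ wDur w := by
  induction w with
  | nil => simp [wDur]
  | cons l w ih => simp only [wDur]; positivity

lemma wEnd_append (ε : ℝ) (w w' : List (A × NNReal)) (z : Euc N × Euc M) :
    wEnd f g ε (w ++ w') z = wEnd f g ε w' (wEnd f g ε w z) := by
  induction w generalizing z with
  | nil => rfl
  | cons l w ih => simp only [List.cons_append, wEnd, ih]

lemma wDur_append (w w' : List (A × NNReal)) : wDur (w ++ w') = wDur w + wDur w' := by
  induction w with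
  | nil => simp [wDur]
  | cons l w ih => simp only [List.cons_append, wDur, ih]; ring

lemma wCost_append (L : A → Euc N × Euc M → ℝ) (ε : ℝ) (w w' : List (A × NNReal))
    (z : Euc N × Euc M) :
    wCost f g L ε (w ++ w') z = wCost f g L ε w z + wCost f g L ε w' (wEnd f g ε w z) := by
  induction w generalizing z with
  | nil => simp [wCost, wEnd]
  | cons l w ih => simp only [List.cons_append, wCost, wEnd, ih]; ring

lemma wIn_end {K : Set (Euc N × Euc M)} {ε : ℝ} {w : List (A × NNReal)} {z : Euc N × Euc M}
    (h : wIn f g K ε w z) : wEnd f g ε w z ∈ K := by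
  induction w generalizing z with
  | nil => exact h
  | cons l w ih => exact ih h.2

lemma wCost_le (H : DynHyp A f g L0 Q0) {L : A → Euc N × Euc M → ℝ} (hL : ∀ a, Continuous (L a))
    {K : Set (Euc N × Euc M)} {C : ℝ} (hC : ∀ z ∈ K, ∀ a, L a z ≤ C)
    {ε : ℝ} {w : List (A × NNReal)} {z : Euc N × Euc M}
    (h : wIn f g K ε w z) : wCost f g L ε w z ≤ wDur w * C := by
  induction w generalizing z with
  | nil => simp [wCost, wDur]
  | cons l w ih =>
    simp only [wCost, wDur]
    have h1 := ih h.2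
    have hc : Continuous fun s => L l.1 (sol f g ε l.1 z s) :=
      (hL _).comp (sol_cont_time H ε l.1.2 z)
    have h2 : (∫ s in (0:ℝ)..l.2, L l.1 (sol f g ε l.1 z s)) ≤ ∫ s in (0:ℝ)..l.2, C := by
      apply intervalIntegral.integral_mono_on l.2.2 (hc.intervalIntegrable _ _) (by simp)
      intro s hs
      exact hC _ (h.1 s hs) _
    simp at h2
    linarith

lemma wEnd_cont (H : DynHyp A f g L0 Q0) (w : List (A × NNReal)) :
    Continuous fun p : ℝ × (Euc N × Euc M) => wEnd f g p.1 w p.2 := by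
  induction w with
  | nil => exact continuous_snd
  | cons l w ih =>
    simp only [wEnd]
    have h1 : Continuous fun p : ℝ × (Euc N × Euc M) => sol f g p.1 l.1 p.2 l.2 :=
      (sol_cont H l.1.2).comp (by fun_prop : Continuous fun p : ℝ × (Euc N × Euc M) =>
        (p.1, p.2, (l.2 : ℝ)))
    exact ih.comp (continuous_fst.prodMk h1)

lemma wCost_cont (H : DynHyp A f g L0 Q0) {L : A → Euc N × Euc M → ℝ}
    (hL : ∀ a, Continuous (L a)) (w : List (A × NNReal)) :
    Continuous fun p : ℝ × (Euc N × Euc M) => wCost f g L p.1 w p.2 := by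
  induction w with
  | nil => exact continuous_const
  | cons l w ih =>
    simp only [wCost]
    have h1 : Continuous fun p : ℝ × (Euc N × Euc M) => sol f g p.1 l.1 p.2 l.2 :=
      (sol_cont H l.1.2).comp (by fun_prop : Continuous fun p : ℝ × (Euc N × Euc M) =>
        (p.1, p.2, (l.2 : ℝ)))
    refine Continuous.add ?_ (ih.comp (continuous_fst.prodMk h1))
    apply intervalIntegral.continuous_parametric_intervalIntegral_of_continuous'
    exact (hL l.1).comp ((sol_cont H l.1.2).comp
      (by fun_prop : Continuous fun q : (ℝ × (Euc N × Euc M)) × ℝ => (q.1.1, q.1.2, q.2)))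

lemma wEnd_fst_le (H : DynHyp A f g L0 Q0) (ε : ℝ) (w : List (A × NNReal)) (z : Euc N × Euc M) :
    ‖(wEnd f g ε w z).1 - z.1‖ ≤ |ε| * Q0 * wDur w := by
  induction w generalizing z with
  | nil => simp [wEnd, wDur]
  | cons l w ih =>
    simp only [wEnd, wDur]
    have h1 := ih (sol f g ε l.1 z l.2)
    have h2 := sol_fst_le H ε l.1.2 z (t := l.2) l.2.2
    have h3 := norm_sub_le_norm_sub_add_norm_sub
      (wEnd f g ε w (sol f g ε l.1 z l.2)).1 (sol f g ε l.1 z l.2).1 z.1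
    linarith

/-- Splitting the cost `ℓ + p·f + b`. -/
lemma wCost_split (H : DynHyp A f g L0 Q0) {ℓ : A → Euc N × Euc M → ℝ}
    (hL : ∀ a, Continuous (ℓ a)) (p : Euc N) (b ε : ℝ) (w : List (A × NNReal))
    (z : Euc N × Euc M) :
    ε * wCost f g (fun a z => ℓ a z + ⟪p, f z.1 z.2 a⟫ + b) ε w z =
      ε * wCost f g ℓ ε w z + ⟪p, (wEnd f g ε w z).1 - z.1⟫ + b * (ε * wDur w) := by
  induction w generalizing z with
  | nil => simp [wCost, wDur, wEnd]
  | cons l w ih =>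
    simp only [wEnd, wDur, wCost, mul_add]
    rw [ih]
    have hs := sol_cont_time H ε l.1.2 z
    have hc1 : Continuous fun s => ℓ l.1 (sol f g ε l.1 z s) := (hL _).comp hs
    have hcf : Continuous fun s => f (sol f g ε l.1 z s).1 (sol f g ε l.1 z s).2 l.1 :=
      (f_cont H l.1.2).comp hs
    have hc2 : Continuous fun s => ⟪p, f (sol f g ε l.1 z s).1 (sol f g ε l.1 z s).2 l.1⟫ :=
      continuous_const.inner hcf
    have e1 : (∫ s in (0:ℝ)..l.2, (ℓ l.1 (sol f g ε l.1 z s) +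
        ⟪p, f (sol f g ε l.1 z s).1 (sol f g ε l.1 z s).2 l.1⟫ + b)) =
        (∫ s in (0:ℝ)..l.2, ℓ l.1 (sol f g ε l.1 z s)) +
        (∫ s in (0:ℝ)..l.2, ⟪p, f (sol f g ε l.1 z s).1 (sol f g ε l.1 z s).2 l.1⟫) +
        l.2 * b := by
      have hc3 : Continuous fun s => ℓ l.1 (sol f g ε l.1 z s) +
        ⟪p, f (sol f g ε l.1 z s).1 (sol f g ε l.1 z s).2 l.1⟫ := hc1.add hc2
      rw [intervalIntegral.integral_add (hc3.intervalIntegrable _ _)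
          (continuous_const.intervalIntegrable _ _),
        intervalIntegral.integral_add (hc1.intervalIntegrable _ _) (hc2.intervalIntegrable _ _)]
      simp
    have e2 : (∫ s in (0:ℝ)..l.2, ⟪p, f (sol f g ε l.1 z s).1 (sol f g ε l.1 z s).2 l.1⟫) =
        ⟪p, ∫ s in (0:ℝ)..l.2, f (sol f g ε l.1 z s).1 (sol f g ε l.1 z s).2 l.1⟫ := by
      have := (innerSL ℝ p).intervalIntegral_comp_comm
        (hcf.intervalIntegrable (μ := volume) 0 l.2)
      simpa using this
    have e3 : ⟪p, (sol f g ε l.1 z l.2).1 - z.1⟫ =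
        ε * ⟪p, ∫ s in (0:ℝ)..l.2, f (sol f g ε l.1 z s).1 (sol f g ε l.1 z s).2 l.1⟫ := by
      rw [sol_fst H ε l.1.2 z (t := (l.2 : ℝ)) l.2.coe_nonneg, add_sub_cancel_left, inner_smul_right]
    rw [e1, e2]
    have e4 : ⟪p, (wEnd f g ε w (sol f g ε l.1 z l.2)).1 - z.1⟫ =
      ⟪p, (wEnd f g ε w (sol f g ε l.1 z l.2)).1 - (sol f g ε l.1 z l.2).1⟫ +
      ⟪p, (sol f g ε l.1 z l.2).1 - z.1⟫ := by
      rw [← inner_add_right]; congr 1; abel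
    rw [e4, e3]
    ring

end System

open Set MeasureTheory Metric Filter
open scoped RealInnerProductSpace Topology

/-! ### Elementary facts on the value function -/

section Value
variable {N M k : ℕ} {A : Set (Euc k)}
    {f : Euc N → Euc M → Euc k → Euc N} {g : Euc N → Euc M → Euc k → Euc M}
    {L0 Q0 : ℝ} {ℓ : Euc N → Euc M → Euc k → ℝ} {u0 : Euc N → Euc M → ℝ}

/-- The hypotheses on the costs. -/
structure CostHyp (A : Set (Euc k)) (Q0 : ℝ) (ℓ : Euc N → Euc M → Euc k → ℝ)
    (u0 : Euc N → Euc M → ℝ) : Prop where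
  lCont : Continuous fun z : Euc N × Euc M × Euc k => ℓ z.1 z.2.1 z.2.2
  lCoer : ∀ B : Set (Euc N), IsCompact B → ∀ c : ℝ, ∃ R : ℝ,
      ∀ y : Euc M, R < ‖y‖ → ∀ x ∈ B, ∀ a ∈ A, c < ℓ x y a
  uCont : Continuous fun z : Euc N × Euc M => u0 z.1 z.2
  uBdd : ∀ x y, -Q0 ≤ u0 x y

lemma l_cont (C : CostHyp A Q0 ℓ u0) (a : Euc k) :
    Continuous fun z : Euc N × Euc M => ℓ z.1 z.2 a :=
  C.lCont.comp (by fun_prop : Continuous fun z : Euc N × Euc M => (z.1, z.2, a))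

/-- Upper and lower bound for `ℓ` on compact sets. -/
lemma l_abs_le (H : DynHyp A f g L0 Q0) (C : CostHyp A Q0 ℓ u0) {K : Set (Euc N × Euc M)}
    (hK : IsCompact K) : ∃ m : ℝ, 0 ≤ m ∧ ∀ z ∈ K, ∀ a ∈ A, |ℓ z.1 z.2 a| ≤ m := by
  have hc : Continuous fun q : (Euc N × Euc M) × Euc k => |ℓ q.1.1 q.1.2 q.2| :=
    (C.lCont.comp (by fun_prop : Continuous fun q : (Euc N × Euc M) × Euc k =>
      (q.1.1, q.1.2, q.2))).abs
  obtain ⟨m, hm⟩ := ((hK.prod H.cpt).image hc).bddAbove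
  refine ⟨max m 0, le_max_right _ _, fun z hz a ha => le_max_of_le_left ?_⟩
  exact hm ⟨(z, a), ⟨hz, ha⟩, rfl⟩

lemma l_lower (H : DynHyp A f g L0 Q0) (C : CostHyp A Q0 ℓ u0) {B : Set (Euc N)}
    (hB : IsCompact B) : ∃ m : ℝ, 0 ≤ m ∧ ∀ x ∈ B, ∀ y, ∀ a ∈ A, -m ≤ ℓ x y a := by
  obtain ⟨R, hR⟩ := C.lCoer B hB 0
  obtain ⟨m, hm0, hm⟩ := l_abs_le H C (hB.prod (isCompact_closedBall (0 : Euc M) R))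
  refine ⟨m, hm0, fun x hx y a ha => ?_⟩
  by_cases h : R < ‖y‖
  · have := hR y h x hx a ha
    linarith
  · have := hm (x, y) ⟨hx, by simpa using not_lt.1 h⟩ a ha
    exact (abs_le.1 this).1

/-- The set of costs of the competitors. -/
def vset (A : Set (Euc k))
    (f : Euc N → Euc M → Euc k → Euc N) (g : Euc N → Euc M → Euc k → Euc M)
    (ℓ : Euc N → Euc M → Euc k → ℝ) (u0 : Euc N → Euc M → ℝ)
    (ε : ℝ) (x : Euc N) (y : Euc M) (t : ℝ) : Set ℝ :=
  { v : ℝ | ∃ (α : ℝ → Euc k) (ξ : ℝ → Euc N) (η : ℝ → Euc M),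
    IsControl A α ∧ IsTrajectory f g ε α ξ η ∧ ξ 0 = x ∧ η 0 = y ∧
    IntervalIntegrable (fun s => ℓ (ξ s) (η s) (α s)) volume 0 (t / ε) ∧
    v = ε * (∫ s in (0:ℝ)..(t / ε), ℓ (ξ s) (η s) (α s)) + u0 (ξ (t / ε)) (η (t / ε)) }

lemma valueFun_eq (ε : ℝ) (x : Euc N) (y : Euc M) (t : ℝ) :
    valueFun A f g ℓ u0 ε x y t = sInf (vset A f g ℓ u0 ε x y t) := rfl

lemma sol_traj (H : DynHyp A f g L0 Q0) (ε : ℝ) {a : Euc k} (ha : a ∈ A) (z : Euc N × Euc M) :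
    IsTrajectory f g ε (fun _ => a) (fun s => (sol f g ε a z s).1)
      (fun s => (sol f g ε a z s).2) := by
  have hs := sol_cont_time H ε ha z
  have h0 : sol f g ε a z 0 = z := (sol_spec H ε ha z).zero
  refine ⟨fun t _ => ?_, fun t _ => ?_, fun t ht => ?_, fun t ht => ?_⟩
  · exact ((f_cont H ha).comp hs).intervalIntegrable _ _
  · exact ((g_cont H ha).comp hs).intervalIntegrable _ _
  · simp only [h0]; exact sol_fst H ε ha z ht
  · simp only [h0]; exact sol_snd H ε ha z ht

lemma vset_nonempty (H : DynHyp A f g L0 Q0) (C : CostHyp A Q0 ℓ u0) (ε : ℝ)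
    (x : Euc N) (y : Euc M) (t : ℝ) : (vset A f g ℓ u0 ε x y t).Nonempty := by
  obtain ⟨a, ha⟩ := H.ne
  have h0 : sol f g ε a (x, y) 0 = (x, y) := (sol_spec H ε ha _).zero
  refine ⟨_, fun _ => a, _, _, ⟨measurable_const, fun _ => ha⟩, sol_traj H ε ha (x, y),
    by simp [h0], by simp [h0], ?_, rfl⟩
  exact ((l_cont C a).comp (sol_cont_time H ε ha _)).intervalIntegrable _ _

lemma vset_lower (H : DynHyp A f g L0 Q0) (C : CostHyp A Q0 ℓ u0) {B : Set (Euc N)} {m : ℝ}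
    (hm : ∀ x ∈ B, ∀ y, ∀ a ∈ A, -m ≤ ℓ x y a) {ε : ℝ} (hε : 0 < ε)
    (x : Euc N) (y : Euc M) {t : ℝ} (ht : 0 ≤ t) (hB : closedBall x (Q0 * t) ⊆ B)
    {v : ℝ} (hv : v ∈ vset A f g ℓ u0 ε x y t) : -Q0 - m * t ≤ v := by
  obtain ⟨α, ξ, η, hα, hT, h0, -, hIntg, rfl⟩ := hv
  have hte : 0 ≤ t / ε := by positivity
  have h1 := C.uBdd (ξ (t / ε)) (η (t / ε))
  have h2 : ∫ s in (0:ℝ)..(t / ε), (-m) ≤ ∫ s in (0:ℝ)..(t / ε), ℓ (ξ s) (η s) (α s) := by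
    apply intervalIntegral.integral_mono_on hte (continuous_const.intervalIntegrable _ _) hIntg
    intro s hs
    refine hm _ (hB ?_) _ _ (hα.2 s)
    rw [mem_closedBall, dist_eq_norm, hT.2.2.1 s hs.1, h0, add_sub_cancel_left, norm_smul,
      Real.norm_eq_abs, abs_of_pos hε]
    have h3 := intervalIntegral.norm_integral_le_of_norm_le_const (a := 0) (b := s)
      (f := fun s => f (ξ s) (η s) (α s)) (C := Q0) (fun r _ => H.fBdd _ _ _ (hα.2 r))
    rw [sub_zero, abs_of_nonneg hs.1] at h3
    have hQ := H.Q0pos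
    calc ε * ‖∫ s in (0:ℝ)..s, f (ξ s) (η s) (α s)‖ ≤ ε * (Q0 * s) := by gcongr
      _ ≤ ε * (Q0 * (t / ε)) := by gcongr; exact hs.2
      _ = Q0 * t := by field_simp
  rw [intervalIntegral.integral_const, sub_zero, smul_eq_mul] at h2
  have h3 : ε * (t / ε * -m) ≤ ε * ∫ s in (0:ℝ)..(t / ε), ℓ (ξ s) (η s) (α s) := by gcongr
  have h4 : ε * (t / ε * -m) = - (m * t) := by field_simp
  linarith

lemma vset_bddBelow (H : DynHyp A f g L0 Q0) (C : CostHyp A Q0 ℓ u0) {ε : ℝ} (hε : 0 < ε)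
    (x : Euc N) (y : Euc M) {t : ℝ} (ht : 0 ≤ t) : BddBelow (vset A f g ℓ u0 ε x y t) := by
  obtain ⟨m, -, hm⟩ := l_lower H C (isCompact_closedBall x (Q0 * t))
  exact ⟨_, fun v hv => vset_lower H C hm hε x y ht subset_rfl hv⟩

lemma value_lower (H : DynHyp A f g L0 Q0) (C : CostHyp A Q0 ℓ u0) {B : Set (Euc N)} {m : ℝ}
    (hm : ∀ x ∈ B, ∀ y, ∀ a ∈ A, -m ≤ ℓ x y a) {ε : ℝ} (hε : 0 < ε)
    (x : Euc N) (y : Euc M) {t : ℝ} (ht : 0 ≤ t) (hB : closedBall x (Q0 * t) ⊆ B) :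
    -Q0 - m * t ≤ valueFun A f g ℓ u0 ε x y t :=
  le_csInf (vset_nonempty H C ε x y t) fun _ hv => vset_lower H C hm hε x y ht hB hv

lemma value_zero_le (H : DynHyp A f g L0 Q0) (C : CostHyp A Q0 ℓ u0) {ε : ℝ} (hε : 0 < ε)
    (x : Euc N) (y : Euc M) : valueFun A f g ℓ u0 ε x y 0 ≤ u0 x y := by
  apply csInf_le (vset_bddBelow H C hε x y le_rfl)
  obtain ⟨a, ha⟩ := H.ne
  have h0 : sol f g ε a (x, y) 0 = (x, y) := (sol_spec H ε ha _).zero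
  refine ⟨fun _ => a, _, _, ⟨measurable_const, fun _ => ha⟩, sol_traj H ε ha (x, y),
    by simp [h0], by simp [h0], by simp, by simp [h0]⟩

/-- Dynamic programming inequality for one constant control. -/
lemma dpp_letter (H : DynHyp A f g L0 Q0) (C : CostHyp A Q0 ℓ u0) {ε : ℝ} (hε : 0 < ε)
    (z : Euc N × Euc M) {t : ℝ} {a : Euc k} (ha : a ∈ A) {s : ℝ} (hs : 0 ≤ s)
    (hst : ε * s ≤ t) :
    valueFun A f g ℓ u0 ε z.1 z.2 t ≤
      ε * (∫ r in (0:ℝ)..s, ℓ (sol f g ε a z r).1 (sol f g ε a z r).2 a) +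
      valueFun A f g ℓ u0 ε (sol f g ε a z s).1 (sol f g ε a z s).2 (t - ε * s) := by
  set J := ∫ r in (0:ℝ)..s, ℓ (sol f g ε a z r).1 (sol f g ε a z r).2 a with hJ
  have ht : 0 ≤ t := le_trans (by positivity) hst
  rw [← sub_le_iff_le_add']
  apply le_csInf (vset_nonempty H C _ _ _ _)
  rintro v ⟨α, ξ, η, hα, hT, hx, hy, hIntg, rfl⟩
  rw [sub_le_iff_le_add']
  have hz0 : sol f g ε a z 0 = z := (sol_spec H ε ha z).zero
  have hdiv : (t - ε * s) / ε = t / ε - s := by field_simp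
  rw [hdiv] at hIntg ⊢
  have hle : s ≤ t / ε := by rw [le_div_iff₀ hε]; linarith
  -- concatenated control and trajectory
  let α' : ℝ → Euc k := fun r => if r ≤ s then a else α (r - s)
  let ξ' : ℝ → Euc N := fun r => if r ≤ s then (sol f g ε a z r).1 else ξ (r - s)
  let η' : ℝ → Euc M := fun r => if r ≤ s then (sol f g ε a z r).2 else η (r - s)
  have hsc := sol_cont_time H ε ha z
  -- generic facts on integrals
  have gen1 : ∀ {F : Type} [NormedAddCommGroup F] [NormedSpace ℝ F] [CompleteSpace F]
      (φ : Euc N → Euc M → Euc k → F) (r : ℝ), 0 ≤ r → r ≤ s →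
      (Continuous fun z : Euc N × Euc M => φ z.1 z.2 a) →
      IntervalIntegrable (fun q => φ (ξ' q) (η' q) (α' q)) volume 0 r ∧
      ∫ q in (0:ℝ)..r, φ (ξ' q) (η' q) (α' q) =
        ∫ q in (0:ℝ)..r, φ (sol f g ε a z q).1 (sol f g ε a z q).2 a := by
    intro F _ _ _ φ r h0 hr hφ
    have hi : IntervalIntegrable (fun q => φ (sol f g ε a z q).1 (sol f g ε a z q).2 a)
        volume 0 r := (hφ.comp hsc).intervalIntegrable _ _
    constructor
    · refine hi.congr ?_
      intro q hq
      rw [uIoc_of_le h0] at hq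
      simp [ξ', η', α', hq.2.trans hr]
    · apply intervalIntegral.integral_congr
      intro q hq
      rw [uIcc_of_le h0] at hq
      simp [ξ', η', α', hq.2.trans hr]
  have gen2 : ∀ {F : Type} [NormedAddCommGroup F] [NormedSpace ℝ F] [CompleteSpace F]
      (φ : Euc N → Euc M → Euc k → F) (r : ℝ), s ≤ r →
      IntervalIntegrable (fun q => φ (ξ q) (η q) (α q)) volume 0 (r - s) →
      IntervalIntegrable (fun q => φ (ξ' q) (η' q) (α' q)) volume s r ∧
      ∫ q in s..r, φ (ξ' q) (η' q) (α' q) =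
        ∫ q in (0:ℝ)..(r - s), φ (ξ q) (η q) (α q) := by
    intro F _ _ _ φ r hr hi
    have hi' := hi.comp_sub_right s
    rw [zero_add, sub_add_cancel] at hi'
    constructor
    · refine hi'.congr ?_
      intro q hq
      rw [uIoc_of_le hr] at hq
      simp [ξ', η', α', not_le.2 hq.1]
    · have := intervalIntegral.integral_comp_sub_right (a := s) (b := r)
        (fun q => φ (ξ q) (η q) (α q)) s
      rw [sub_self] at this
      rw [← this]
      apply intervalIntegral.integral_congr_ae
      refine Eventually.of_forall fun q hq => ?_
      rw [uIoc_of_le hr] at hq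
      simp [ξ', η', α', not_le.2 hq.1]
  have hα' : IsControl A α' := by
    constructor
    · exact Measurable.ite measurableSet_Iic measurable_const
        (hα.1.comp (measurable_id.sub_const s))
    · intro r
      by_cases hr : r ≤ s
      · simp [α', hr, ha]
      · simp [α', hr, hα.2]
  have hfc := f_cont H ha
  have hgc := g_cont H ha
  have hlc := l_cont C a
  have hξ0 : ξ' 0 = z.1 := by simp [ξ', hs, hz0]
  have hη0 : η' 0 = z.2 := by simp [η', hs, hz0]
  have hT' : IsTrajectory f g ε α' ξ' η' := by
    refine ⟨fun r h0 => ?_, fun r h0 => ?_, fun r h0 => ?_, fun r h0 => ?_⟩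
    · rcases le_total r s with hr | hr
      · exact (gen1 f r h0 hr hfc).1
      · exact (gen1 f s hs le_rfl hfc).1.trans
          (gen2 f r hr (hT.1 _ (by linarith))).1
    · rcases le_total r s with hr | hr
      · exact (gen1 g r h0 hr hgc).1
      · exact (gen1 g s hs le_rfl hgc).1.trans
          (gen2 g r hr (hT.2.1 _ (by linarith))).1
    · rw [hξ0]
      by_cases hr : r ≤ s
      · rw [(gen1 f r h0 hr hfc).2, ← sol_fst H ε ha z h0]
        simp [ξ', hr]
      · have hr' := (not_le.1 hr).le
        have h1 := gen1 f s hs le_rfl hfc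
        have h2 := gen2 f r hr' (hT.1 _ (by linarith))
        rw [← intervalIntegral.integral_add_adjacent_intervals h1.1 h2.1, h1.2, h2.2, smul_add,
          ← add_assoc, ← sol_fst H ε ha z hs]
        simp only [ξ', hr, if_false]
        rw [hT.2.2.1 _ (by linarith : (0:ℝ) ≤ r - s), hx]
    · rw [hη0]
      by_cases hr : r ≤ s
      · rw [(gen1 g r h0 hr hgc).2, ← sol_snd H ε ha z h0]
        simp [η', hr]
      · have hr' := (not_le.1 hr).le
        have h1 := gen1 g s hs le_rfl hgc
        have h2 := gen2 g r hr' (hT.2.1 _ (by linarith))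
        rw [← intervalIntegral.integral_add_adjacent_intervals h1.1 h2.1, h1.2, h2.2,
          ← add_assoc, ← sol_snd H ε ha z hs]
        simp only [η', hr, if_false]
        rw [hT.2.2.2 _ (by linarith : (0:ℝ) ≤ r - s), hy]
  have l1 := gen1 ℓ s hs le_rfl hlc
  have l2 := gen2 ℓ (t / ε) hle hIntg
  have hξe : ξ' (t / ε) = ξ (t / ε - s) := by
    by_cases hr : t / ε ≤ s
    · have : t / ε = s := le_antisymm hr hle
      simp [ξ', this, hx]
    · simp [ξ', hr]
  have hηe : η' (t / ε) = η (t / ε - s) := by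
    by_cases hr : t / ε ≤ s
    · have : t / ε = s := le_antisymm hr hle
      simp [η', this, hy]
    · simp [η', hr]
  rw [← add_assoc, ← mul_add]
  apply csInf_le (vset_bddBelow H C hε z.1 z.2 ht)
  refine ⟨α', ξ', η', hα', hT', hξ0, hη0, l1.1.trans l2.1, ?_⟩
  rw [← intervalIntegral.integral_add_adjacent_intervals l1.1 l2.1, l1.2, l2.2, hξe, hηe]

/-- Dynamic programming inequality for words. -/
lemma dpp_word (H : DynHyp A f g L0 Q0) (C : CostHyp A Q0 ℓ u0) {ε : ℝ} (hε : 0 < ε)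
    (w : List (A × NNReal)) (z : Euc N × Euc M) {t : ℝ} (hst : ε * wDur w ≤ t) :
    valueFun A f g ℓ u0 ε z.1 z.2 t ≤
      ε * wCost f g (fun a z => ℓ z.1 z.2 a) ε w z +
      valueFun A f g ℓ u0 ε (wEnd f g ε w z).1 (wEnd f g ε w z).2 (t - ε * wDur w) := by
  induction w generalizing z t with
  | nil => simp [wCost, wEnd, wDur]
  | cons l w ih =>
    simp only [wDur, wCost, wEnd, mul_add] at hst ⊢
    have hw := mul_nonneg hε.le (wDur_nonneg w)
    have h1 := dpp_letter H C hε z l.1.2 (s := (l.2 : ℝ)) l.2.coe_nonneg (t := t) (by linarith)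
    have h2 := ih (sol f g ε l.1 z l.2) (t := t - ε * l.2) (by linarith)
    rw [sub_sub] at h2
    linarith

end Value

open Set MeasureTheory Metric Filter
open scoped RealInnerProductSpace Topology

section Steering
variable {N M k : ℕ} {A : Set (Euc k)}
    {f : Euc N → Euc M → Euc k → Euc N} {g : Euc N → Euc M → Euc k → Euc M}
    {L0 Q0 : ℝ}

lemma ctrl_dir (H : DynHyp A f g L0 Q0) {K : Set (Euc N × Euc M)} (hK : IsCompact K) :
    ∃ r > 0, ∀ z ∈ K, ∀ e : Euc M, ‖e‖ = 1 → ∃ a ∈ A, ⟪e, g z.1 z.2 a⟫ < -(r / 2) := by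
  obtain ⟨r, hr, h⟩ := H.ctrl K hK
  refine ⟨r, hr, fun z hz e he => ?_⟩
  by_contra hcon
  push Not at hcon
  have hmem : (-(3 * r / 4)) • e ∈ closure (convexHull ℝ ((fun a => g z.1 z.2 a) '' A)) := by
    apply h z hz
    rw [mem_ball_zero_iff, norm_smul, he, Real.norm_eq_abs, abs_neg, abs_of_pos (by positivity)]
    linarith
  have hsub : closure (convexHull ℝ ((fun a => g z.1 z.2 a) '' A)) ⊆
      {v : Euc M | -(r / 2) ≤ ⟪e, v⟫} := by
    apply closure_minimal
    · apply convexHull_min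
      · rintro _ ⟨a, ha, rfl⟩
        exact hcon a ha
      · exact convex_halfSpace_ge (innerSL ℝ e).isLinear _
    · exact isClosed_le continuous_const (continuous_const.inner continuous_id)
  have := hsub hmem
  simp only [mem_setOf_eq, inner_smul_right, real_inner_self_eq_norm_sq, he] at this
  linarith

lemma steer_step (H : DynHyp A f g L0 Q0) {K : Set (Euc N × Euc M)} (hK : IsCompact K)
    (y1 : Euc M) :
    ∃ c > 0, ∀ ρ > 0, ∀ ε > 0, ∃ σ > 0, ∀ z ∈ K, ∃ a ∈ A, ∀ s ∈ Icc (0:ℝ) σ,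
      ‖(sol f g ε a z s).2 - y1‖ ≤ max (2 * ρ) (‖z.2 - y1‖ - c * s) := by
  obtain ⟨r, hr, hdir⟩ := ctrl_dir H hK
  obtain ⟨a0, ha0⟩ := H.ne
  have hcov := (hK.prod (isCompact_sphere (0 : Euc M) 1)).elim_finite_subcover
    (fun a : A => {p : (Euc N × Euc M) × Euc M | ⟪p.2, g p.1.1 p.1.2 a⟫ < -(r / 2)})
    (fun a => isOpen_lt (continuous_snd.inner ((g_cont H a.2).comp continuous_fst))
      continuous_const)
    (by
      rintro ⟨z, e⟩ ⟨hz, he⟩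
      obtain ⟨a, ha, h⟩ := hdir z hz e (by simpa using he)
      exact mem_iUnion.2 ⟨⟨a, ha⟩, h⟩)
  obtain ⟨t, ht⟩ := hcov
  have hbd : ∀ a : A, ∃ G, ∀ z ∈ K, ‖g z.1 z.2 a‖ ≤ G := fun a =>
    hK.exists_bound_of_continuousOn (g_cont H a.2).continuousOn
  choose Gf hGf using hbd
  classical
  obtain ⟨G0, hG0⟩ := ((insert ⟨a0, ha0⟩ t : Finset A).image Gf).exists_le
  have hG : ∀ a ∈ (insert ⟨a0, ha0⟩ t : Finset A), ∀ z ∈ K, ‖g z.1 z.2 a‖ ≤ max G0 1 :=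
    fun a ha z hz => ((hGf a z hz).trans (hG0 _ (Finset.mem_image_of_mem _ ha))).trans
      (le_max_left _ _)
  have hG1 : 1 ≤ max G0 1 := le_max_right _ _
  set G := max G0 1
  refine ⟨r / 8, by positivity, fun ρ hρ ε hε => ?_⟩
  have hQ := H.Q0pos
  have hL := H.L0pos
  set G' := ε * Q0 + G with hG'
  have hG'0 : 0 < G' := by positivity
  have hKp := Kc_pos H ε
  have hex : ∀ᶠ s in 𝓝[>] (0:ℝ), (Kc L0 ε : ℝ) * s ≤ 1 / 2 ∧ s * G ^ 2 ≤ r * ρ / 2 ∧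
      s * r / 4 ≤ ρ ∧ 4 * L0 * G' * s ≤ r / 8 ∧ 2 * G' * s ≤ ρ := by
    have key : ∀ F : ℝ → ℝ, Continuous F → F 0 = 0 → ∀ b > 0, ∀ᶠ s in 𝓝[>] (0:ℝ), F s ≤ b := by
      intro F hF h0 b hb
      apply Filter.Eventually.filter_mono nhdsWithin_le_nhds
      have := hF.tendsto 0
      rw [h0] at this
      exact this.eventually (eventually_le_nhds hb)
    filter_upwards [key (fun s => (Kc L0 ε : ℝ) * s) (by fun_prop) (by simp) (1/2) (by norm_num),
      key (fun s => s * G ^ 2) (by fun_prop) (by simp) (r * ρ / 2) (by positivity),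
      key (fun s => s * r / 4) (by fun_prop) (by simp) ρ hρ,
      key (fun s => 4 * L0 * G' * s) (by fun_prop) (by simp) (r / 8) (by positivity),
      key (fun s => 2 * G' * s) (by fun_prop) (by simp) ρ hρ] with s h1 h2 h3 h4 h5
    exact ⟨h1, h2, h3, h4, h5⟩
  obtain ⟨σ, ⟨hs1, hs2, hs3, hs4, hs5⟩, hσ⟩ := (hex.and self_mem_nhdsWithin).exists
  have hσ : 0 < σ := hσ
  refine ⟨σ, hσ, fun z hz => ?_⟩
  have hvf : ∀ a : A, a ∈ (insert ⟨a0, ha0⟩ t : Finset A) → ‖vf f g ε a z‖ ≤ G' := by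
    intro a ha
    rw [Prod.norm_def]
    apply max_le
    · simp only [vf, norm_smul, Real.norm_eq_abs, abs_of_pos hε]
      have := H.fBdd z.1 z.2 a a.2
      have : ε * ‖f z.1 z.2 a‖ ≤ ε * Q0 := by gcongr
      linarith
    · simp only [vf]
      have := hG a ha z hz
      have : 0 < ε * Q0 := by positivity
      linarith
  have hshort : ∀ a : A, a ∈ (insert ⟨a0, ha0⟩ t : Finset A) → ∀ s ∈ Icc (0:ℝ) σ,
      ‖sol f g ε a z s - z‖ ≤ 2 * G' * s := by
    intro a ha s hs
    apply (sol_spec H ε a.2 z).short (vf_lip H ε a.2) (hvf a ha) hs.1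
    refine le_trans ?_ hs1
    gcongr
    exact hs.2
  by_cases hw : ‖z.2 - y1‖ < ρ
  · refine ⟨a0, ha0, fun s hs => le_max_of_le_left ?_⟩
    have h1 := hshort ⟨a0, ha0⟩ (by simp) s hs
    have h2 := (norm_snd_le _).trans h1
    simp only [Prod.snd_sub] at h2
    have h3 := norm_sub_le_norm_sub_add_norm_sub (sol f g ε a0 z s).2 z.2 y1
    have h4 : 2 * G' * s ≤ 2 * G' * σ := by gcongr; exact hs.2
    linarith
  · push Not at hw
    set w := z.2 - y1 with hwdef
    have hw0 : 0 < ‖w‖ := hρ.trans_le hw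
    have hmem := ht (show (z, (‖w‖⁻¹ • w)) ∈ K ×ˢ sphere (0 : Euc M) 1 from
      ⟨hz, by simp [norm_smul, hw0.ne']⟩)
    simp only [mem_iUnion, mem_setOf_eq, exists_prop] at hmem
    obtain ⟨a, hat, hag⟩ := hmem
    rw [inner_smul_left] at hag
    simp only [conj_trivial] at hag
    have hag' : ⟪w, g z.1 z.2 a⟫ ≤ -(r / 2) * ‖w‖ := by
      have := mul_lt_mul_of_pos_right hag hw0
      rw [mul_comm ‖w‖⁻¹, mul_assoc, inv_mul_cancel₀ hw0.ne', mul_one] at this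
      exact this.le
    have hat' : a ∈ (insert ⟨a0, ha0⟩ t : Finset A) := Finset.mem_insert_of_mem hat
    refine ⟨a, a.2, fun s hs => le_max_of_le_right ?_⟩
    have hs0 := hs.1
    have hg := hG a hat' z hz
    -- first estimate
    have e1 : ‖w + s • g z.1 z.2 a‖ ≤ ‖w‖ - s * r / 4 := by
      have hsr : s * r / 4 ≤ ‖w‖ := by
        have : s * r / 4 ≤ σ * r / 4 := by gcongr; exact hs.2
        linarith
      apply le_of_sq_le_sq _ (by linarith) |> fun h => h
      rw [norm_add_sq_real, inner_smul_right, norm_smul, Real.norm_eq_abs, abs_of_nonneg hs0]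
      have h1 : s * ⟪w, g z.1 z.2 a⟫ ≤ s * (-(r / 2) * ‖w‖) := by gcongr
      have h2 : (s * ‖g z.1 z.2 a‖) ^ 2 ≤ s * (r * ‖w‖ / 2) := by
        have : (s * ‖g z.1 z.2 a‖) ^ 2 ≤ s * (s * G ^ 2) := by
          rw [mul_pow, sq s, mul_assoc]; gcongr
        have h3 : s * G ^ 2 ≤ σ * G ^ 2 := by gcongr; exact hs.2
        have h4 : r * ρ / 2 ≤ r * ‖w‖ / 2 := by gcongr
        have h5 : s * (s * G ^ 2) ≤ s * (r * ‖w‖ / 2) := by gcongr; linarith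
        linarith
      nlinarith [sq_nonneg (s * r / 4)]
    have e2 : ‖((sol f g ε a z s).2 - y1) - (w + s • g z.1 z.2 a)‖ ≤ (4 * L0 * G' * s) * s := by
      rw [sol_snd H ε a.2 z hs0]
      have hc : Continuous fun τ => g (sol f g ε a z τ).1 (sol f g ε a z τ).2 a :=
        (g_cont H a.2).comp (sol_cont_time H ε a.2 z)
      have : z.2 + (∫ τ in (0:ℝ)..s, g (sol f g ε a z τ).1 (sol f g ε a z τ).2 a) - y1 -
          (w + s • g z.1 z.2 a) =
          ∫ τ in (0:ℝ)..s, (g (sol f g ε a z τ).1 (sol f g ε a z τ).2 a - g z.1 z.2 a) := by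
        rw [intervalIntegral.integral_sub (hc.intervalIntegrable _ _) (by simp)]
        simp [hwdef]
        abel
      rw [this]
      have := intervalIntegral.norm_integral_le_of_norm_le_const (a := 0) (b := s)
        (f := fun τ => g (sol f g ε a z τ).1 (sol f g ε a z τ).2 a - g z.1 z.2 a)
        (C := 4 * L0 * G' * s) (fun τ hτ => by
          rw [uIoc_of_le hs0] at hτ
          have h1 := H.gLip (sol f g ε a z τ).1 z.1 (sol f g ε a z τ).2 z.2 a a.2
          have h2 := sum_le_two_norm (sol f g ε a z τ - z)
          have h3 := hshort a hat' τ ⟨hτ.1.le, hτ.2.trans hs.2⟩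
          simp only [Prod.fst_sub, Prod.snd_sub] at h2
          have h4 : 2 * G' * τ ≤ 2 * G' * s := by gcongr; exact hτ.2
          calc _ ≤ _ := h1
            _ ≤ L0 * (2 * (2 * G' * s)) := by gcongr; linarith
            _ = _ := by ring)
      simpa [abs_of_nonneg hs0] using this
    have e3 : (4 * L0 * G' * s) * s ≤ r / 8 * s := by
      have : 4 * L0 * G' * s ≤ 4 * L0 * G' * σ := by gcongr; exact hs.2
      gcongr; linarith
    have e4 := norm_sub_norm_le ((sol f g ε a z s).2 - y1) (w + s • g z.1 z.2 a)
    linarith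

/-- Iterated steering. -/
lemma steer_iter (H : DynHyp A f g L0 Q0) {x1 : Euc N} {y1 : Euc M} {R R1 c ρ ε σ : ℝ}
    (hc : 0 < c) (hρR : 2 * ρ ≤ R1) (hε : 0 < ε)
    (hstep : ∀ z ∈ closedBall x1 R ×ˢ closedBall y1 R1, ∃ a ∈ A, ∀ s ∈ Icc (0:ℝ) σ,
      ‖(sol f g ε a z s).2 - y1‖ ≤ max (2 * ρ) (‖z.2 - y1‖ - c * s))
    (τ : NNReal) (hτ : (τ:ℝ) ≤ σ) (n : ℕ) (z : Euc N × Euc M)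
    (hz1 : ‖z.1 - x1‖ + ε * Q0 * (n * τ) ≤ R) (hz2 : ‖z.2 - y1‖ ≤ R1) :
    ∃ w : List (A × NNReal), wDur w = n * τ ∧
      wIn f g (closedBall x1 R ×ˢ closedBall y1 R1) ε w z ∧
      ‖(wEnd f g ε w z).2 - y1‖ ≤ max (2 * ρ) (‖z.2 - y1‖ - c * (n * τ)) := by
  have hQ := H.Q0pos
  have hτ0 := τ.coe_nonneg
  induction n generalizing z with
  | zero =>
    refine ⟨[], by simp [wDur], ?_, by simp [wEnd]⟩
    simp only [wIn, mem_prod, mem_closedBall, dist_eq_norm]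
    refine ⟨by simpa using hz1, hz2⟩
  | succ n ih =>
    have hzK : z ∈ closedBall x1 R ×ˢ closedBall y1 R1 := by
      simp only [mem_prod, mem_closedBall, dist_eq_norm]
      have : 0 ≤ ε * Q0 * ((n + 1 : ℕ) * τ) := by positivity
      exact ⟨by linarith, hz2⟩
    obtain ⟨a, ha, h⟩ := hstep z hzK
    have hx : ∀ s : ℝ, 0 ≤ s → ‖(sol f g ε a z s).1 - x1‖ ≤ ‖z.1 - x1‖ + ε * Q0 * s := by
      intro s hs
      have h1 := sol_fst_le H ε ha z hs
      rw [abs_of_pos hε] at h1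
      have h3 := norm_sub_le_norm_sub_add_norm_sub (sol f g ε a z s).1 z.1 x1
      linarith
    have hy : ∀ s ∈ Icc (0:ℝ) τ, ‖(sol f g ε a z s).2 - y1‖ ≤ R1 := by
      intro s hs
      refine (h s ⟨hs.1, hs.2.trans hτ⟩).trans (max_le hρR ?_)
      have : 0 ≤ c * s := mul_nonneg hc.le hs.1
      linarith
    push_cast at hz1
    obtain ⟨w, hw1, hw2, hw3⟩ := ih (sol f g ε a z τ)
      (by have := hx τ hτ0; linarith) (hy τ ⟨hτ0, le_rfl⟩)
    refine ⟨(⟨a, ha⟩, τ) :: w, ?_, ⟨?_, hw2⟩, ?_⟩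
    · simp only [wDur, hw1]; push_cast; ring
    · intro s hs
      simp only [mem_prod, mem_closedBall, dist_eq_norm]
      refine ⟨(hx s hs.1).trans ?_, hy s hs⟩
      have h2 : ε * Q0 * s ≤ ε * Q0 * τ := by gcongr; exact hs.2
      have h3 : 0 ≤ ε * Q0 * (n * τ) := by positivity
      linarith
    · simp only [wEnd]
      refine hw3.trans (max_le (le_max_left _ _) ?_)
      have h1 := h τ ⟨hτ0, hτ⟩
      push_cast
      rcases le_max_iff.1 h1 with h2 | h2
      · apply le_max_of_le_left
        have : 0 ≤ c * (n * τ) := by positivity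
        linarith
      · apply le_max_of_le_right
        linarith

lemma steer (H : DynHyp A f g L0 Q0) (x1 : Euc N) (y1 : Euc M) (R R1 : ℝ) :
    ∃ c > 0, ∀ ρ > 0, 2 * ρ ≤ R1 → ∀ ε > 0, ∀ D ≥ 0, ∀ z : Euc N × Euc M,
      ‖z.1 - x1‖ + ε * Q0 * D ≤ R → ‖z.2 - y1‖ ≤ R1 →
      ∃ w : List (A × NNReal), wDur w = D ∧
        wIn f g (closedBall x1 R ×ˢ closedBall y1 R1) ε w z ∧
        ‖(wEnd f g ε w z).2 - y1‖ ≤ max (2 * ρ) (‖z.2 - y1‖ - c * D) := by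
  obtain ⟨c, hc, h⟩ := steer_step H
    ((isCompact_closedBall x1 R).prod (isCompact_closedBall y1 R1)) y1
  refine ⟨c, hc, fun ρ hρ hρR ε hε D hD z hz1 hz2 => ?_⟩
  obtain ⟨σ, hσ, hstep⟩ := h ρ hρ ε hε
  obtain ⟨n, hn⟩ := exists_nat_gt (D / σ)
  have hn0 : (0:ℝ) < n := lt_of_le_of_lt (by positivity) hn
  have hτ : (Real.toNNReal (D / n) : ℝ) = D / n := Real.coe_toNNReal _ (by positivity)
  have hnD : (n:ℝ) * (D / n) = D := by field_simp
  have := steer_iter H hc hρR hε hstep (Real.toNNReal (D / n)) (by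
    rw [hτ]; rw [div_lt_iff₀ hσ] at hn; rw [div_le_iff₀ hn0]; linarith) n z
    (by rw [hτ, hnD]; exact hz1) hz2
  rwa [hτ, hnD] at this

end Steering

open Set MeasureTheory Metric Filter
open scoped RealInnerProductSpace Topology

section Equi
variable {N M k : ℕ} {A : Set (Euc k)}
    {f : Euc N → Euc M → Euc k → Euc N} {g : Euc N → Euc M → Euc k → Euc M}
    {L0 Q0 : ℝ} {ℓ : Euc N → Euc M → Euc k → ℝ} {u0 : Euc N → Euc M → ℝ}

lemma value_steer (H : DynHyp A f g L0 Q0) (C : CostHyp A Q0 ℓ u0)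
    (x1 : Euc N) (y1 : Euc M) (R R1 : ℝ) :
    ∃ c > 0, ∃ m ≥ 0, ∀ ρ > 0, 2 * ρ ≤ R1 → ∀ ε > 0, ∀ D ≥ 0, ∀ (z : Euc N × Euc M) (t : ℝ),
      ‖z.1 - x1‖ + ε * Q0 * D ≤ R → ‖z.2 - y1‖ ≤ R1 → ε * D ≤ t →
      ∃ z' : Euc N × Euc M, ‖z'.1 - z.1‖ ≤ ε * Q0 * D ∧
        ‖z'.2 - y1‖ ≤ max (2 * ρ) (‖z.2 - y1‖ - c * D) ∧
        valueFun A f g ℓ u0 ε z.1 z.2 t ≤ m * (ε * D) +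
          valueFun A f g ℓ u0 ε z'.1 z'.2 (t - ε * D) := by
  obtain ⟨c, hc, h⟩ := steer H x1 y1 R R1
  obtain ⟨m, hm0, hm⟩ := l_abs_le H C
    ((isCompact_closedBall x1 R).prod (isCompact_closedBall y1 R1))
  refine ⟨c, hc, m, hm0, fun ρ hρ hρR ε hε D hD z t hz1 hz2 ht => ?_⟩
  obtain ⟨w, hw1, hw2, hw3⟩ := h ρ hρ hρR ε hε D hD z hz1 hz2
  refine ⟨wEnd f g ε w z, ?_, hw3, ?_⟩
  · have := wEnd_fst_le H ε w z
    rwa [abs_of_pos hε, hw1] at this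
  · have h1 := dpp_word H C hε w z (t := t) (by rwa [hw1])
    have h2 := wCost_le H (L := fun a z => ℓ z.1 z.2 a) (fun a => l_cont C a) (C := m)
      (fun z hz a => (abs_le.1 (hm z hz a a.2)).2) hw2
    rw [hw1] at h1 h2
    have h3 := mul_le_mul_of_nonneg_left h2 hε.le
    linarith

lemma locEquibounded (H : DynHyp A f g L0 Q0) (C : CostHyp A Q0 ℓ u0) :
    LocEquibounded (valueFun A f g ℓ u0) := by
  intro S hS
  obtain ⟨r, hr0, hr⟩ : ∃ r > 0, ∀ z ∈ S, ‖z‖ ≤ r := by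
    obtain ⟨r, hr⟩ := hS.exists_norm_le
    exact ⟨max r 1, by positivity, fun z hz => (hr z hz).trans (le_max_left _ _)⟩
  have hQ := H.Q0pos
  set R := r + Q0 * r with hR
  obtain ⟨m1, hm10, hm1⟩ := l_lower H C (isCompact_closedBall (0 : Euc N) R)
  obtain ⟨c, hc, m2, hm20, hst⟩ := value_steer H C (0 : Euc N) (0 : Euc M) R r
  obtain ⟨U, hU⟩ := (((isCompact_closedBall (0 : Euc N) R).prod
    (isCompact_closedBall (0 : Euc M) r)).image C.uCont).bddAbove
  refine ⟨max (Q0 + m1 * r) (m2 * r + U), fun ε hε z hz ht => ?_⟩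
  have hz1 : ‖z.1‖ ≤ r := (norm_fst_le z).trans (hr z hz)
  have hz2 : ‖z.2.1‖ ≤ r := ((norm_fst_le z.2).trans (norm_snd_le z)).trans (hr z hz)
  have hz3 : z.2.2 ≤ r := (le_abs_self _).trans
    (((norm_snd_le z.2).trans (norm_snd_le z)).trans (hr z hz))
  have hQt : Q0 * z.2.2 ≤ Q0 * r := by gcongr
  have heD : ε * (z.2.2 / ε) = z.2.2 := by field_simp
  rw [abs_le]
  constructor
  · have := value_lower H C hm1 hε z.1 z.2.1 ht (by
      apply closedBall_subset_closedBall'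
      rw [dist_zero_right]; linarith) (u0 := u0)
    have h2 : m1 * z.2.2 ≤ m1 * r := by gcongr
    have h3 := le_max_left (Q0 + m1 * r) (m2 * r + U)
    linarith
  · obtain ⟨z', h1, h2, h3⟩ := hst (r / 2) (by positivity) (by linarith) ε hε (z.2.2 / ε)
      (by positivity) (z.1, z.2.1) z.2.2 (by
        simp only [sub_zero]
        rw [mul_right_comm, heD]; linarith) (by simpa using hz2) heD.le
    rw [heD, sub_self] at h3
    rw [mul_right_comm, heD] at h1
    simp only at h1 h2 h3
    have h4 := value_zero_le H C hε z'.1 z'.2 (u0 := u0)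
    have h5 : u0 z'.1 z'.2 ≤ U := by
      apply hU
      refine ⟨z', ⟨?_, ?_⟩, rfl⟩
      · rw [mem_closedBall, dist_zero_right]
        have := norm_sub_norm_le z'.1 z.1
        linarith
      · rw [mem_closedBall, dist_zero_right]
        simp only [sub_zero] at h2
        refine h2.trans (max_le (by linarith) ?_)
        have : 0 ≤ c * (z.2.2 / ε) := by positivity
        linarith
    have h6 : m2 * z.2.2 ≤ m2 * r := by gcongr
    have h7 := le_max_right (Q0 + m1 * r) (m2 * r + U)
    linarith

end Equi

section UpperLim
variable {Z : Type*} [PseudoMetricSpace Z] {V : ℝ → Z → ℝ} {z : Z}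

/-- Local boundedness of the family near `z`. -/
def LocBd (V : ℝ → Z → ℝ) (z : Z) : Prop :=
  ∃ δ > 0, ∃ B : ℝ, ∀ ε > 0, ∀ w, dist w z < δ → |V ε w| ≤ B

lemma LocBd.seq (hb : LocBd V z) {e : ℕ → ℝ} {w : ℕ → Z} (he : ∀ n, 0 < e n)
    (hw : Tendsto w atTop (𝓝 z)) : ∃ B, ∀ᶠ n in atTop, |V (e n) (w n)| ≤ B := by
  obtain ⟨δ, hδ, B, h⟩ := hb
  refine ⟨B, ?_⟩
  filter_upwards [hw.eventually (ball_mem_nhds z hδ)] with n hn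
  exact h _ (he n) _ hn

lemma upperLim_lt (hb : LocBd V z) {c : ℝ} (h : upperLim V z < c) :
    ∃ δ > 0, ∀ ε, 0 < ε → ε < δ → ∀ w, dist w z < δ → V ε w < c := by
  by_contra hcon
  push Not at hcon
  have : ∀ n : ℕ, ∃ p : ℝ × Z, 0 < p.1 ∧ p.1 < 1 / ((n:ℝ) + 1) ∧
      dist p.2 z < 1 / ((n:ℝ) + 1) ∧ c ≤ V p.1 p.2 := by
    intro n
    obtain ⟨ε, h1, h2, w, h3, h4⟩ := hcon (1 / ((n:ℝ) + 1)) (by positivity)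
    exact ⟨(ε, w), h1, h2, h3, h4⟩
  choose p hp1 hp2 hp3 hp4 using this
  have hte : Tendsto (fun n => (p n).1) atTop (𝓝 0) :=
    squeeze_zero (fun n => (hp1 n).le) (fun n => (hp2 n).le) tendsto_one_div_add_atTop_nhds_zero_nat
  have htw : Tendsto (fun n => (p n).2) atTop (𝓝 z) := by
    rw [tendsto_iff_dist_tendsto_zero]
    exact squeeze_zero (fun n => dist_nonneg) (fun n => (hp3 n).le)
      tendsto_one_div_add_atTop_nhds_zero_nat
  have hle : c ≤ Filter.limsup (fun n => V (p n).1 (p n).2) atTop := by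
    obtain ⟨B, hB⟩ := hb.seq hp1 htw
    apply Filter.le_limsup_of_frequently_le
    · exact Filter.Eventually.frequently (Filter.Eventually.of_forall hp4)
    · exact isBoundedUnder_of_eventually_le (a := B) (hB.mono fun n hn => (abs_le.1 hn).2)
  have hle2 : Filter.limsup (fun n => V (p n).1 (p n).2) atTop ≤ upperLim V z := by
    apply le_csSup
    · obtain ⟨δ, hδ, B, hB⟩ := hb
      refine ⟨B, ?_⟩
      rintro _ ⟨e, w, he, -, hw, rfl⟩
      have hev : ∀ᶠ n in atTop, |V (e n) (w n)| ≤ B := by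
        filter_upwards [hw.eventually (ball_mem_nhds z hδ)] with n hn
        exact hB _ (he n) _ hn
      apply Filter.limsup_le_of_le
      · exact (isBoundedUnder_of_eventually_ge (a := -B)
          (hev.mono fun n hn => (abs_le.1 hn).1)).isCoboundedUnder_le
      · exact hev.mono fun n hn => (abs_le.1 hn).2
    · exact ⟨_, _, hp1, hte, htw, rfl⟩
  linarith

lemma upperLim_le (hb : LocBd V z) {c δ : ℝ} (hδ : 0 < δ)
    (h : ∀ ε, 0 < ε → ε < δ → ∀ w, dist w z < δ → V ε w ≤ c) : upperLim V z ≤ c := by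
  apply csSup_le
  · exact ⟨_, fun n => 1 / ((n:ℝ) + 1), fun _ => z, fun n => by positivity,
      tendsto_one_div_add_atTop_nhds_zero_nat, tendsto_const_nhds, rfl⟩
  · rintro _ ⟨e, w, he, hte, hw, rfl⟩
    obtain ⟨B, hB⟩ := hb.seq he hw
    apply Filter.limsup_le_of_le
    · exact (isBoundedUnder_of_eventually_ge (a := -B)
          (hB.mono fun n hn => (abs_le.1 hn).1)).isCoboundedUnder_le
    · filter_upwards [hw.eventually (ball_mem_nhds z hδ), hte.eventually (gt_mem_nhds hδ)]
        with n h1 h2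
      exact h _ (he n) h2 _ h1

end UpperLim

section YIndep
variable {N M k : ℕ} {A : Set (Euc k)}
    {f : Euc N → Euc M → Euc k → Euc N} {g : Euc N → Euc M → Euc k → Euc M}
    {L0 Q0 : ℝ} {ℓ : Euc N → Euc M → Euc k → ℝ} {u0 : Euc N → Euc M → ℝ}

/-- The value functions on the product space. -/
noncomputable abbrev VF (A : Set (Euc k))
    (f : Euc N → Euc M → Euc k → Euc N) (g : Euc N → Euc M → Euc k → Euc M)
    (ℓ : Euc N → Euc M → Euc k → ℝ) (u0 : Euc N → Euc M → ℝ) :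
    ℝ → Euc N × Euc M × ℝ → ℝ := fun ε z => valueFun A f g ℓ u0 ε z.1 z.2.1 z.2.2

lemma locBd_VF (H : DynHyp A f g L0 Q0) (C : CostHyp A Q0 ℓ u0) (x0 : Euc N) (y0 : Euc M)
    {t0 : ℝ} (ht0 : 0 < t0) : LocBd (VF A f g ℓ u0) (x0, y0, t0) := by
  obtain ⟨B, hB⟩ := locEquibounded H C (ball (x0, y0, t0) t0) isBounded_ball
  refine ⟨t0, ht0, B, fun ε hε w hw => hB ε hε w hw ?_⟩
  have h1 : dist w.2.2 t0 < t0 := by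
    refine lt_of_le_of_lt ?_ hw
    exact (le_max_right _ _).trans (le_max_right _ _)
  rw [Real.dist_eq, abs_lt] at h1
  linarith [h1.1]

lemma dist_lt3 {x x0 : Euc N} {y y0 : Euc M} {t t0 δ : ℝ} :
    dist (x, y, t) (x0, y0, t0) < δ ↔ ‖x - x0‖ < δ ∧ ‖y - y0‖ < δ ∧ |t - t0| < δ := by
  rw [Prod.dist_eq, Prod.dist_eq, max_lt_iff, max_lt_iff, dist_eq_norm, dist_eq_norm,
    Real.dist_eq]

lemma yindep_le (H : DynHyp A f g L0 Q0) (C : CostHyp A Q0 ℓ u0) (x0 : Euc N) (y0 z0 : Euc M)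
    {t0 : ℝ} (ht0 : 0 < t0) :
    upperLim (VF A f g ℓ u0) (x0, y0, t0) ≤ upperLim (VF A f g ℓ u0) (x0, z0, t0) := by
  apply le_of_forall_gt_imp_ge_of_dense
  intro c' hc'
  obtain ⟨c, hc1, hc2⟩ := exists_between hc'
  obtain ⟨δ, hδ, hV⟩ := upperLim_lt (locBd_VF H C x0 z0 ht0) hc1
  set R1 := ‖y0 - z0‖ + 1 + δ with hR1
  obtain ⟨κ, hκ, m, hm, hst⟩ := value_steer H C x0 z0 2 R1
  set D := R1 / κ with hD
  have hR1p : 0 < R1 := by positivity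
  have hDp : 0 < D := by positivity
  have hκD : κ * D = R1 := by rw [hD]; field_simp
  have hQ := H.Q0pos
  have key : ∀ F : ℝ → ℝ, Continuous F → F 0 = 0 → ∀ b > 0, ∀ᶠ s in 𝓝[>] (0:ℝ), F s < b := by
    intro F hF h0 b hb
    apply Filter.Eventually.filter_mono nhdsWithin_le_nhds
    have := hF.tendsto 0
    rw [h0] at this
    exact this.eventually (eventually_lt_nhds hb)
  have hex : ∀ᶠ s in 𝓝[>] (0:ℝ), s < δ / 2 ∧ s < 1 ∧ s * Q0 * D < min 1 (δ / 2) ∧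
      s * D < min (t0 / 2) (δ / 2) ∧ s < t0 / 2 ∧ m * (s * D) < c' - c := by
    filter_upwards [key (fun s => s) (by fun_prop) rfl (δ / 2) (by positivity),
      key (fun s => s) (by fun_prop) rfl 1 (by positivity),
      key (fun s => s * Q0 * D) (by fun_prop) (by simp) (min 1 (δ / 2)) (by positivity),
      key (fun s => s * D) (by fun_prop) (by simp) (min (t0 / 2) (δ / 2)) (by positivity),
      key (fun s => s) (by fun_prop) rfl (t0 / 2) (by positivity),
      key (fun s => m * (s * D)) (by fun_prop) (by simp) (c' - c) (by linarith)]
      with s h1 h2 h3 h4 h5 h6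
    exact ⟨h1, h2, h3, h4, h5, h6⟩
  obtain ⟨ε0, ⟨h1, h2, h3, h4, h5, h6⟩, h0⟩ := (hex.and self_mem_nhdsWithin).exists
  have h0 : 0 < ε0 := h0
  refine upperLim_le (locBd_VF H C x0 y0 ht0) h0 ?_
  rintro ε hε hε0 ⟨x, y, t⟩ hw
  rw [dist_lt3] at hw
  obtain ⟨hw1, hw2, hw3⟩ := hw
  rw [abs_lt] at hw3
  have g3 : ε * Q0 * D ≤ ε0 * Q0 * D := by gcongr
  have g4 : ε * D ≤ ε0 * D := by gcongr
  have g6 : m * (ε * D) ≤ m * (ε0 * D) := by gcongr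
  rw [lt_min_iff] at h3 h4
  have hyz : ‖y - z0‖ ≤ R1 := by
    have := norm_sub_le_norm_sub_add_norm_sub y y0 z0
    linarith
  obtain ⟨z', k1, k2, k3⟩ := hst (δ / 4) (by positivity)
    (by have := norm_nonneg (y0 - z0); linarith) ε hε D hDp.le (x, y) t
    (by simp only; linarith) hyz (by linarith)
  have := hV ε hε (by linarith) (z'.1, z'.2, t - ε * D) (by
    rw [dist_lt3]
    refine ⟨?_, ?_, ?_⟩
    · have := norm_sub_le_norm_sub_add_norm_sub z'.1 x x0
      simp only at k1
      linarith
    · refine lt_of_le_of_lt k2 (max_lt (by linarith) ?_)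
      simp only [hκD]; linarith
    · have : 0 < ε * D := by positivity
      rw [abs_lt]; constructor <;> linarith)
  simp only [VF] at this ⊢
  simp only at k3
  linarith

lemma yindep (H : DynHyp A f g L0 Q0) (C : CostHyp A Q0 ℓ u0) (x0 : Euc N) (y0 z0 : Euc M)
    {t0 : ℝ} (ht0 : 0 < t0) :
    upperLim (VF A f g ℓ u0) (x0, y0, t0) = upperLim (VF A f g ℓ u0) (x0, z0, t0) :=
  le_antisymm (yindep_le H C x0 y0 z0 ht0) (yindep_le H C x0 z0 y0 ht0)

lemma Vbar_usc (H : DynHyp A f g L0 Q0) (C : CostHyp A Q0 ℓ u0) :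
    UpperSemicontinuousOn (fun w : Euc N × ℝ => upperLim (VF A f g ℓ u0) (w.1, (0 : Euc M), w.2))
      (univ ×ˢ Ioi (0:ℝ)) := by
  rintro ⟨x0, t0⟩ ⟨-, ht0⟩ c hc
  have ht0 : 0 < t0 := ht0
  obtain ⟨c1, hc1, hc2⟩ := exists_between hc
  obtain ⟨δ, hδ, hV⟩ := upperLim_lt (locBd_VF H C x0 0 ht0) hc1
  apply Filter.Eventually.filter_mono nhdsWithin_le_nhds
  filter_upwards [ball_mem_nhds (x0, t0) (show 0 < min (δ / 2) t0 by positivity)]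
  rintro ⟨x, t⟩ hw
  rw [mem_ball, Prod.dist_eq, max_lt_iff, lt_min_iff, lt_min_iff, dist_eq_norm, Real.dist_eq] at hw
  obtain ⟨⟨a1, a2⟩, a3, a4⟩ := hw
  simp only at a1 a2 a3 a4
  have ht : 0 < t := by rw [abs_lt] at a4; linarith
  refine lt_of_le_of_lt ?_ hc2
  apply upperLim_le (locBd_VF H C x 0 ht) (show 0 < δ / 2 by positivity)
  rintro ε hε hε0 ⟨x', y', t'⟩ hw
  rw [dist_lt3] at hw
  refine (hV ε hε (by linarith) (x', y', t') ?_).le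
  rw [dist_lt3]
  have b1 := norm_sub_le_norm_sub_add_norm_sub x' x x0
  have b2 := abs_sub_le t' t t0
  obtain ⟨d1, d2, d3⟩ := hw
  exact ⟨by linarith, by linarith, by linarith⟩

lemma init_cond (H : DynHyp A f g L0 Q0) (C : CostHyp A Q0 ℓ u0) (x0 : Euc N) (c : ℝ)
    (hc : (⨅ y : Euc M, u0 x0 y) < c) :
    ∀ᶠ w : Euc N × ℝ in 𝓝[{w : Euc N × ℝ | 0 < w.2}] (x0, 0),
      upperLim (VF A f g ℓ u0) (w.1, (0 : Euc M), w.2) < c := by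
  obtain ⟨y1, hy1⟩ := exists_lt_of_ciInf_lt hc
  obtain ⟨c1, hc1, hc2⟩ := exists_between hy1
  have hcont := C.uCont.tendsto (x0, y1)
  have hev : ∀ᶠ z : Euc N × Euc M in 𝓝 (x0, y1), u0 z.1 z.2 < c1 :=
    hcont.eventually (gt_mem_nhds hc1)
  obtain ⟨δ, hδ, hu⟩ := Metric.eventually_nhds_iff.1 hev
  obtain ⟨κ, hκ, m, hm, hst⟩ := value_steer H C x0 y1 δ (δ / 2)
  have hQ := H.Q0pos
  set s0 := min (δ / 4) (min (δ / (8 * Q0)) ((c - c1) / (4 * (m + 1)))) with hs0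
  have hs0p : 0 < s0 := by
    rw [hs0]
    refine lt_min (by positivity) (lt_min (by positivity) (div_pos (by linarith) (by positivity)))
  have s1 : s0 ≤ δ / 4 := min_le_left _ _
  have s2 : s0 * Q0 ≤ δ / 8 := by
    have : s0 ≤ δ / (8 * Q0) := (min_le_right _ _).trans (min_le_left _ _)
    rw [le_div_iff₀ (by positivity)] at this
    linarith
  have s3 : m * s0 ≤ (c - c1) / 4 := by
    have : s0 ≤ (c - c1) / (4 * (m + 1)) := (min_le_right _ _).trans (min_le_right _ _)
    rw [le_div_iff₀ (by positivity)] at this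
    linarith
  clear_value s0
  rw [eventually_nhdsWithin_iff]
  filter_upwards [ball_mem_nhds (x0, (0:ℝ)) hs0p]
  rintro ⟨x, t⟩ hw ht
  have ht : 0 < t := ht
  rw [mem_ball, Prod.dist_eq, max_lt_iff, dist_eq_norm, Real.dist_eq, sub_zero] at hw
  obtain ⟨a1, a2⟩ := hw
  simp only at a1 a2 ⊢
  rw [abs_of_pos ht] at a2
  rw [yindep H C x 0 y1 ht]
  have : c1 + (c - c1) / 2 < c := by linarith
  refine lt_of_le_of_lt ?_ this
  apply upperLim_le (locBd_VF H C x y1 ht) (show 0 < min s0 t by positivity)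
  rintro ε hε - ⟨x', y', t'⟩ hw
  rw [dist_lt3, lt_min_iff, lt_min_iff, lt_min_iff] at hw
  obtain ⟨⟨d1, -⟩, ⟨d2, -⟩, d3, d4⟩ := hw
  rw [abs_lt] at d3 d4
  have ht' : 0 < t' := by linarith
  have ht'2 : t' ≤ 2 * s0 := by linarith
  have heD : ε * (t' / ε) = t' := by field_simp
  have hQt : Q0 * t' ≤ Q0 * (2 * s0) := by gcongr
  have hmt : m * t' ≤ m * (2 * s0) := by gcongr
  have heQ : ε * Q0 * (t' / ε) = Q0 * t' := by rw [mul_right_comm, heD, mul_comm]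
  have b1 := norm_sub_le_norm_sub_add_norm_sub x' x x0
  obtain ⟨z', k1, k2, k3⟩ := hst (δ / 4) (by positivity) (by linarith) ε hε (t' / ε)
    (by positivity) (x', y') t' (by rw [heQ]; simp only; linarith) (by simp only; linarith) heD.le
  rw [heD, sub_self] at k3
  rw [heQ] at k1
  simp only at k1 k2 k3
  have h4 := value_zero_le H C hε z'.1 z'.2 (u0 := u0)
  have h5 : u0 z'.1 z'.2 < c1 := by
    apply hu
    rw [Prod.dist_eq, max_lt_iff, dist_eq_norm, dist_eq_norm]
    constructor
    · have := norm_sub_le_norm_sub_add_norm_sub z'.1 x' x0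
      simp only
      linarith
    · refine lt_of_le_of_lt k2 (max_lt (by linarith) ?_)
      have : 0 ≤ κ * (t' / ε) := by positivity
      linarith
  simp only [VF]
  linarith

end YIndep

open Set MeasureTheory Metric Filter
open scoped RealInnerProductSpace Topology

section Cell
variable {N M k : ℕ} {A : Set (Euc k)}
    {f : Euc N → Euc M → Euc k → Euc N} {g : Euc N → Euc M → Euc k → Euc M}
    {L0 Q0 : ℝ} {ℓ : Euc N → Euc M → Euc k → ℝ} {u0 : Euc N → Euc M → ℝ}

lemma ctrl_nonpos (H : DynHyp A f g L0 Q0) (z : Euc N × Euc M) (q : Euc M) :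
    ∃ a ∈ A, ⟪q, g z.1 z.2 a⟫ ≤ 0 := by
  by_cases hq : q = 0
  · obtain ⟨a, ha⟩ := H.ne
    exact ⟨a, ha, by simp [hq]⟩
  · obtain ⟨r, hr, h⟩ := ctrl_dir H (isCompact_singleton (x := z))
    have hq' : 0 < ‖q‖ := norm_pos_iff.2 hq
    obtain ⟨a, ha, h1⟩ := h z rfl (‖q‖⁻¹ • q) (by simp [norm_smul, hq'.ne'])
    refine ⟨a, ha, ?_⟩
    rw [inner_smul_left] at h1
    simp only [conj_trivial] at h1
    by_contra hcon
    push Not at hcon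
    have : 0 < ‖q‖⁻¹ * ⟪q, g z.1 z.2 a⟫ := by positivity
    linarith

lemma ham_lower (H : DynHyp A f g L0 Q0) {x : Euc N} {y : Euc M} (p : Euc N) (q : Euc M) {m : ℝ}
    (hm : ∀ a ∈ A, |ℓ x y a| ≤ m) (hm0 : 0 ≤ m) : -(‖p‖ * Q0) - m ≤ Ham A f g ℓ x y p q := by
  have hQ := H.Q0pos
  unfold Ham
  by_cases hb : BddAbove ((fun a => -⟪p, f x y a⟫ - ⟪q, g x y a⟫ - ℓ x y a) '' A)
  · obtain ⟨a, ha, h1⟩ := ctrl_nonpos H (x, y) q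
    refine le_trans ?_ (le_csSup hb ⟨a, ha, rfl⟩)
    have h2 := real_inner_le_norm p (f x y a)
    have h3 : ‖p‖ * ‖f x y a‖ ≤ ‖p‖ * Q0 := by gcongr; exact H.fBdd _ _ _ ha
    have h4 := (abs_le.1 (hm a ha)).2
    simp only at h1 ⊢
    linarith
  · rw [Real.sSup_of_not_bddAbove hb]
    have : 0 ≤ ‖p‖ * Q0 := by positivity
    linarith

lemma levels_bddBelow (H : DynHyp A f g L0 Q0) (C : CostHyp A Q0 ℓ u0) (x0 p : Euc N) :
    BddBelow (subsolLevels (fun y q : Euc M => Ham A f g ℓ x0 y p q)) := by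
  obtain ⟨m, hm0, hm⟩ := l_abs_le H C
    ((isCompact_singleton (x := x0)).prod (isCompact_closedBall (0 : Euc M) 1))
  refine ⟨-(‖p‖ * Q0) - m, ?_⟩
  rintro b ⟨u, husc, hu⟩
  have husc' : UpperSemicontinuousOn u (closedBall 0 1) := husc.mono (subset_univ _)
  have hne : (closedBall (0 : Euc M) 1).Nonempty := ⟨0, by simp⟩
  have hcomp := isCompact_closedBall (0 : Euc M) 1
  obtain ⟨y1, hy1, hmax1⟩ := UpperSemicontinuousOn.exists_isMaxOn hne hcomp husc'
  set κ := u y1 - u 0 + 1 with hκ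
  have hψc : ContDiff ℝ 1 (fun y : Euc M => κ * ‖y‖ ^ 2) :=
    contDiff_const.mul (contDiff_norm_sq ℝ)
  have h2 : UpperSemicontinuousOn (fun y : Euc M => u y - κ * ‖y‖ ^ 2) (closedBall 0 1) := by
    have := husc'.add (hψc.continuous.neg.upperSemicontinuous.upperSemicontinuousOn
      (closedBall (0 : Euc M) 1))
    simpa [sub_eq_add_neg] using this
  obtain ⟨y2, hy2, hmax2⟩ := UpperSemicontinuousOn.exists_isMaxOn hne hcomp h2
  have h0 := hmax2 (show (0 : Euc M) ∈ closedBall 0 1 by simp)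
  have h1 := hmax1 hy2
  simp only [mem_setOf_eq, norm_zero] at h0 h1
  have hy2' : ‖y2‖ < 1 := by
    rw [mem_closedBall_zero_iff] at hy2
    refine lt_of_le_of_ne hy2 fun h => ?_
    rw [h] at h0
    linarith
  have hloc : IsLocalMaxOn (fun z => u z - κ * ‖z‖ ^ 2) univ y2 := by
    apply Filter.Eventually.filter_mono nhdsWithin_le_nhds
    filter_upwards [isOpen_ball.mem_nhds (show y2 ∈ ball (0 : Euc M) 1 by simpa using hy2')]
      with y hy
    exact hmax2 (ball_subset_closedBall hy)
  refine le_trans ?_ (hu _ hψc y2 (mem_univ _) hloc)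
  exact ham_lower H p _ (fun a ha => hm (x0, y2) ⟨rfl, hy2⟩ a ha) hm0

/-- The running cost of the cell problem. -/
noncomputable def LL (f : Euc N → Euc M → Euc k → Euc N) (ℓ : Euc N → Euc M → Euc k → ℝ)
    (p : Euc N) (b : ℝ) (a : A) (z : Euc N × Euc M) : ℝ :=
  ℓ z.1 z.2 a + ⟪p, f z.1 z.2 a⟫ + b

lemma LL_cont (H : DynHyp A f g L0 Q0) (C : CostHyp A Q0 ℓ u0) (p : Euc N) (b : ℝ) (a : A) :
    Continuous (LL (A := A) f ℓ p b a) :=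
  ((l_cont C a).add (continuous_const.inner (f_cont H a.2))).add continuous_const

lemma sol_zero_eq (H : DynHyp A f g L0 Q0) {a : Euc k} (ha : a ∈ A) (z : Euc N × Euc M) {t : ℝ}
    (ht : 0 ≤ t) : (sol f g 0 a z t).1 = z.1 := by
  have := sol_fst_le H 0 ha z ht
  simp only [abs_zero, zero_mul, norm_le_zero_iff, sub_eq_zero] at this
  exact this

lemma right_deriv_nonneg {F : ℝ → ℝ} {F' : ℝ} (hF : HasDerivWithinAt F F' (Ici 0) 0)
    (h0 : F 0 = 0) (hpos : ∀ᶠ s in 𝓝[>] (0:ℝ), 0 ≤ F s) : 0 ≤ F' := by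
  have h := hasDerivWithinAt_iff_tendsto_slope.1 hF
  rw [Ici_sdiff_left] at h
  refine ge_of_tendsto h ?_
  filter_upwards [hpos, self_mem_nhdsWithin] with s hs hs'
  have hs' : 0 < s := hs'
  rw [slope_def_field, h0, sub_zero, sub_zero]
  positivity

lemma level_of_bdd (H : DynHyp A f g L0 Q0) (C : CostHyp A Q0 ℓ u0) (x0 p : Euc N) (b : ℝ)
    (hb : ∀ y : Euc M, BddBelow (range fun w : List (A × NNReal) =>
      wCost f g (LL f ℓ p b) 0 w (x0, y))) :
    b ∈ subsolLevels (fun y q : Euc M => Ham A f g ℓ x0 y p q) := by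
  set u : Euc M → ℝ := fun y => ⨅ w : List (A × NNReal), wCost f g (LL f ℓ p b) 0 w (x0, y)
    with hu
  have hLc := LL_cont H C p b (A := A)
  refine ⟨u, ?_, ?_⟩
  · apply UpperSemicontinuous.upperSemicontinuousOn
    apply upperSemicontinuous_ciInf hb
    intro w
    apply Continuous.upperSemicontinuous
    exact (wCost_cont H hLc w).comp
      (by fun_prop : Continuous fun y : Euc M => ((0:ℝ), (x0, y)))
  · intro ψ hψ y _ hmax
    apply csSup_le (H.ne.image _)
    rintro _ ⟨a, ha, rfl⟩
    -- the curve
    set γ := sol f g 0 a (x0, y) with hγ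
    have hs := sol_spec H 0 ha (x0, y)
    have hγc : Continuous γ := hs.1
    have hγ0 : γ 0 = (x0, y) := hs.zero
    have hdpp : ∀ s : ℝ, 0 ≤ s → u y ≤ (∫ τ in (0:ℝ)..s, LL f ℓ p b ⟨a, ha⟩ (γ τ)) + u (γ s).2 := by
      intro s hs0
      rw [← sub_le_iff_le_add']
      apply le_ciInf
      intro w
      rw [sub_le_iff_le_add']
      have h1 := ciInf_le (hb y) ((⟨a, ha⟩, Real.toNNReal s) :: w)
      simp only [wCost, Real.coe_toNNReal s hs0] at h1
      have h2 : sol f g 0 a (x0, y) s = (x0, (γ s).2) := by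
        refine Prod.ext ?_ rfl
        exact sol_zero_eq H ha (x0, y) hs0
      rw [h2] at h1
      exact h1
    have hder := hs.hasDeriv (vf_lip H 0 ha).continuous (le_refl 0)
    rw [← hγ, hγ0] at hder
    have hder2 : HasDerivWithinAt (fun s => (γ s).2) (g x0 y a) (Ici 0) 0 := by
      have := (ContinuousLinearMap.snd ℝ (Euc N) (Euc M)).hasFDerivAt.comp_hasDerivWithinAt
        (0:ℝ) hder
      simpa [vf, Function.comp_def] using this
    have hψd : HasFDerivAt ψ (fderiv ℝ ψ y) (γ 0).2 := by
      rw [hγ0]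
      exact (hψ.differentiable one_ne_zero y).hasFDerivAt
    have hder3 := hψd.comp_hasDerivWithinAt (0:ℝ) hder2
    have hLγ : Continuous fun τ => LL f ℓ p b ⟨a, ha⟩ (γ τ) := (hLc _).comp hγc
    have hder4 : HasDerivWithinAt (fun s => ∫ τ in (0:ℝ)..s, LL f ℓ p b ⟨a, ha⟩ (γ τ))
        (LL f ℓ p b ⟨a, ha⟩ (γ 0)) (Ici 0) 0 :=
      (intervalIntegral.integral_hasDerivAt_right (hLγ.intervalIntegrable _ _)
        hLγ.aestronglyMeasurable.stronglyMeasurableAtFilter hLγ.continuousAt).hasDerivWithinAt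
    have hF := (hder4.add hder3).sub_const (ψ y)
    have hnn := right_deriv_nonneg hF (by simp [hγ0]) (by
      have hγ2 : Tendsto (fun s => (γ s).2) (𝓝[>] 0) (𝓝 y) := by
        have : Tendsto (fun s => (γ s).2) (𝓝 0) (𝓝 (γ 0).2) :=
          (continuous_snd.comp hγc).tendsto 0
        rw [hγ0] at this
        exact this.mono_left nhdsWithin_le_nhds
      have hmax' : ∀ᶠ z in 𝓝 y, u z - ψ z ≤ u y - ψ y := by
        have := hmax
        rw [IsLocalMaxOn, nhdsWithin_univ] at this
        exact this
      filter_upwards [hγ2.eventually hmax', self_mem_nhdsWithin] with s h1 h2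
      have h3 := hdpp s (le_of_lt h2)
      simp only [Pi.add_apply, Function.comp_apply]
      linarith)
    have hgr : ⟪gradient ψ y, g x0 y a⟫ = fderiv ℝ ψ y (g x0 y a) := by
      simp [gradient]
    rw [hγ0] at hnn
    simp only [LL] at hnn
    beta_reduce
    rw [hgr]
    linarith

lemma trim (H : DynHyp A f g L0 Q0) {L : A → Euc N × Euc M → ℝ} (hL : ∀ a, Continuous (L a))
    {x0 : Euc N} {R : ℝ} (hR : ∀ a, ∀ y : Euc M, R < ‖y‖ → 0 < L a (x0, y))
    (w : List (A × NNReal)) (y : Euc M) :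
    ∃ w' : List (A × NNReal), wCost f g L 0 w' (x0, y) ≤ wCost f g L 0 w (x0, y) ∧
      (w' = [] ∨ ‖(wEnd f g 0 w' (x0, y)).2‖ ≤ R) := by
  induction w generalizing y with
  | nil => exact ⟨[], le_rfl, Or.inl rfl⟩
  | cons l w ih =>
    have hsol : ∀ s : ℝ, 0 ≤ s → sol f g 0 l.1 (x0, y) s = (x0, (sol f g 0 l.1 (x0, y) s).2) :=
      fun s hs0 => Prod.ext (sol_zero_eq H l.1.2 (x0, y) hs0) rfl
    set y1 := (sol f g 0 l.1 (x0, y) l.2).2 with hy1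
    have hl := hsol l.2 l.2.coe_nonneg
    rw [← hy1] at hl
    obtain ⟨w1, h1, h2⟩ := ih y1
    by_cases hend : ‖(wEnd f g 0 w1 (x0, y1)).2‖ ≤ R
    · refine ⟨l :: w1, ?_, Or.inr ?_⟩
      · simp only [wCost, hl]
        linarith
      · simpa only [wEnd, hl] using hend
    · have hw1 : w1 = [] := h2.resolve_right hend
      subst hw1
      simp only [wCost] at h1
      set J : ℝ → ℝ := fun t => ∫ s in (0:ℝ)..t, L l.1 (sol f g 0 l.1 (x0, y) s) with hJ
      have hLγ : Continuous fun s => L l.1 (sol f g 0 l.1 (x0, y) s) :=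
        (hL _).comp (sol_cont_time H 0 l.1.2 _)
      have hJc : Continuous J := by
        apply intervalIntegral.continuous_primitive
        intro a b; exact hLγ.intervalIntegrable _ _
      obtain ⟨t, ht, hmin⟩ := (isCompact_Icc (a := (0:ℝ)) (b := l.2)).exists_isMinOn
        ⟨0, le_rfl, l.2.coe_nonneg⟩ hJc.continuousOn
      have hmin2 : J t ≤ J l.2 := hmin ⟨l.2.coe_nonneg, le_rfl⟩
      have hcost : J t ≤ wCost f g L 0 (l :: w) (x0, y) := by
        simp only [wCost, hl]
        simp only [hJ] at hmin2 ⊢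
        linarith
      rcases eq_or_lt_of_le ht.1 with h0 | h0
      · refine ⟨[], ?_, Or.inl rfl⟩
        refine le_trans ?_ hcost
        simp [wCost, hJ, ← h0]
      · refine ⟨[(l.1, Real.toNNReal t)], ?_, Or.inr ?_⟩
        · refine le_trans ?_ hcost
          simp [wCost, hJ, Real.coe_toNNReal t h0.le]
        · simp only [wEnd, Real.coe_toNNReal t h0.le]
          by_contra hcon
          push Not at hcon
          have hpos : 0 < L l.1 (sol f g 0 l.1 (x0, y) t) := by
            rw [hsol t h0.le]; exact hR _ _ hcon
          have hev := hLγ.continuousAt.eventually (lt_mem_nhds hpos)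
          obtain ⟨δ, hδ, hev⟩ := Metric.eventually_nhds_iff.1 hev
          set h := min (δ / 2) t with hh
          have hhp : 0 < h := by positivity
          have hht : h ≤ t := min_le_right _ _
          have hhd : h ≤ δ / 2 := min_le_left _ _
          have hJle : J t ≤ J (t - h) := hmin ⟨by linarith, by linarith [ht.2]⟩
          have hIntg : J t - J (t - h) = ∫ s in (t - h)..t, L l.1 (sol f g 0 l.1 (x0, y) s) :=
            intervalIntegral.integral_interval_sub_left (hLγ.intervalIntegrable _ _)
              (hLγ.intervalIntegrable _ _)
          have : 0 < ∫ s in (t - h)..t, L l.1 (sol f g 0 l.1 (x0, y) s) := by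
            apply intervalIntegral.intervalIntegral_pos_of_pos_on (hLγ.intervalIntegrable _ _)
            · intro s hs
              apply hev
              rw [Real.dist_eq, abs_lt]
              constructor <;> linarith [hs.1, hs.2]
            · linarith
          linarith

end Cell

open Set MeasureTheory Metric Filter
open scoped RealInnerProductSpace Topology

section Loop
variable {N M k : ℕ} {A : Set (Euc k)}
    {f : Euc N → Euc M → Euc k → Euc N} {g : Euc N → Euc M → Euc k → Euc M}
    {L0 Q0 : ℝ} {ℓ : Euc N → Euc M → Euc k → ℝ} {u0 : Euc N → Euc M → ℝ}

lemma loop_exists (H : DynHyp A f g L0 Q0) (C : CostHyp A Q0 ℓ u0) (x0 p : Euc N) (b : ℝ)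
    (hb : b < effH A f g ℓ x0 p) :
    ∃ y0 : Euc M, ∃ T > 0, ∃ ρ > 0, ∃ ε0 > 0, ∀ ε, 0 < ε → ε < ε0 → ∀ z : Euc N × Euc M,
      ‖z.1 - x0‖ ≤ ρ → ‖z.2 - y0‖ ≤ ρ → ∃ w : List (A × NNReal), wDur w ≤ T ∧
        wCost f g (LL f ℓ p b) ε w z ≤ -1 ∧ ‖(wEnd f g ε w z).2 - y0‖ ≤ ρ := by
  have hnot : b ∉ subsolLevels (fun y q : Euc M => Ham A f g ℓ x0 y p q) :=
    notMem_of_lt_csInf hb (levels_bddBelow H C x0 p)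
  have hex : ∃ y0 : Euc M, ¬ BddBelow (range fun w : List (A × NNReal) =>
      wCost f g (LL f ℓ p b) 0 w (x0, y0)) := by
    by_contra hcon
    push Not at hcon
    exact hnot (level_of_bdd H C x0 p b hcon)
  obtain ⟨y0, hy0⟩ := hex
  have hQ := H.Q0pos
  have hLc := LL_cont H C p b (A := A)
  have hpf : ∀ (z : Euc N × Euc M) (a : A), |⟪p, f z.1 z.2 a⟫| ≤ ‖p‖ * Q0 := by
    intro z a
    refine (abs_real_inner_le_norm _ _).trans ?_
    gcongr
    exact H.fBdd _ _ _ a.2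
  obtain ⟨R', hR'⟩ := C.lCoer {x0} isCompact_singleton (‖p‖ * Q0 + |b|)
  set R := max R' 0 with hR
  have hR0 : 0 ≤ R := le_max_right _ _
  have hRpos : ∀ (a : A) (y : Euc M), R < ‖y‖ → 0 < LL f ℓ p b a (x0, y) := by
    intro a y hy
    have h1 := hR' y ((le_max_left _ _).trans_lt hy) x0 rfl a a.2
    have h2 := (abs_le.1 (hpf (x0, y) a)).1
    have h3 := neg_abs_le b
    simp only [LL] at h2 ⊢
    linarith
  set R1 := R + ‖y0‖ + 2 with hR1
  obtain ⟨c, hc, hst⟩ := steer H x0 y0 1 R1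
  have hR1p : 0 < R1 := by positivity
  set D := R1 / c with hD
  have hDp : 0 < D := by positivity
  have hcD : c * D = R1 := by rw [hD]; field_simp
  obtain ⟨m, hm0, hm⟩ := l_abs_le H C
    ((isCompact_closedBall x0 1).prod (isCompact_closedBall y0 R1))
  set CL := m + ‖p‖ * Q0 + |b| with hCL
  have hCL0 : 0 ≤ CL := by positivity
  have hLLle : ∀ z ∈ closedBall x0 1 ×ˢ closedBall y0 R1, ∀ a : A, LL f ℓ p b a z ≤ CL := by
    intro z hz a
    have h1 := (abs_le.1 (hm z hz a a.2)).2
    have h2 := (abs_le.1 (hpf z a)).2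
    have h3 := le_abs_self b
    simp only [LL]
    linarith
  rw [not_bddBelow_iff] at hy0
  obtain ⟨_, ⟨w0, rfl⟩, hw0⟩ := hy0 (-(D * CL + 2))
  obtain ⟨w1, hw1, hw1e⟩ := trim H hLc hRpos w0 y0
  have hDCL : 0 ≤ D * CL := by positivity
  have hw1c : wCost f g (LL f ℓ p b) 0 w1 (x0, y0) < -(D * CL + 1) := by
    simp only at hw0; linarith
  have hw1end : ‖(wEnd f g 0 w1 (x0, y0)).2‖ ≤ R := by
    rcases hw1e with h | h
    · rw [h] at hw1c
      simp only [wCost] at hw1c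
      linarith
    · exact h
  have hw1x : (wEnd f g 0 w1 (x0, y0)).1 = x0 := by
    have := wEnd_fst_le H 0 w1 (x0, y0)
    simpa [sub_eq_zero] using this
  -- continuity
  have ev1 := ((wCost_cont H hLc w1).tendsto (0, (x0, y0))).eventually (gt_mem_nhds hw1c)
  have hendc := wEnd_cont H (f := f) (g := g) w1
  have ev2 : ∀ᶠ q : ℝ × (Euc N × Euc M) in 𝓝 (0, (x0, y0)), ‖(wEnd f g q.1 w1 q.2).2‖ < R + 1 :=
    ((hendc.snd.norm).tendsto (0, (x0, y0))).eventually
      (gt_mem_nhds (by simp only; linarith))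
  have ev3 : ∀ᶠ q : ℝ × (Euc N × Euc M) in 𝓝 (0, (x0, y0)),
      ‖(wEnd f g q.1 w1 q.2).1 - x0‖ < 1 / 2 :=
    (((hendc.fst.sub continuous_const).norm).tendsto (0, (x0, y0))).eventually
      (gt_mem_nhds (by simp [hw1x]))
  obtain ⟨δ, hδ, hev⟩ := Metric.eventually_nhds_iff.1 (ev1.and (ev2.and ev3))
  set ρ := min (δ / 2) 1 with hρ
  have hρp : 0 < ρ := by positivity
  have hρδ : ρ ≤ δ / 2 := min_le_left _ _
  have hρ1 : ρ ≤ 1 := min_le_right _ _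
  refine ⟨y0, wDur w1 + D, by have := wDur_nonneg w1; positivity, ρ, hρp,
    min δ (1 / (2 * Q0 * D)), by positivity, ?_⟩
  intro ε hε hε0 z hz1 hz2
  rw [lt_min_iff] at hε0
  obtain ⟨he1, he2⟩ := hε0
  rw [lt_div_iff₀ (by positivity)] at he2
  have hq := @hev (ε, z) (by
    rw [Prod.dist_eq, Prod.dist_eq, max_lt_iff, max_lt_iff, dist_eq_norm, dist_eq_norm,
      dist_eq_norm, Real.norm_eq_abs]
    simp only [sub_zero, abs_of_pos hε]
    exact ⟨he1, by linarith, by linarith⟩)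
  obtain ⟨q1, q2, q3⟩ := hq
  simp only at q1 q2 q3
  have hny := norm_sub_le (wEnd f g ε w1 z).2 y0
  obtain ⟨w2, e1, e2, e3⟩ := hst (ρ / 2) (by positivity) (by linarith [norm_nonneg y0]) ε hε D
    hDp.le (wEnd f g ε w1 z) (by linarith) (by linarith)
  refine ⟨w1 ++ w2, ?_, ?_, ?_⟩
  · rw [wDur_append, e1]
  · rw [wCost_append]
    have := wCost_le H hLc hLLle e2
    rw [e1] at this
    linarith
  · rw [wEnd_append]
    refine e3.trans (max_le (by linarith) ?_)
    rw [hcD]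
    linarith

/-- Uniform upper bound on compact sets. -/
lemma unif_upper (H : DynHyp A f g L0 Q0) (C : CostHyp A Q0 ℓ u0)
    {ψ : Euc N × ℝ → ℝ} (hψ : Continuous ψ) {K : Set (Euc N × Euc M × ℝ)} (hK : IsCompact K)
    (hpos : ∀ z ∈ K, 0 < z.2.2) {m κ : ℝ} (hκ : 0 < κ)
    (hle : ∀ z ∈ K, upperLim (VF A f g ℓ u0) z ≤ ψ (z.1, z.2.2) + m) :
    ∃ ε1 > 0, ∀ ε, 0 < ε → ε < ε1 → ∀ z ∈ K,
      VF A f g ℓ u0 ε z ≤ ψ (z.1, z.2.2) + m + κ := by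
  refine hK.induction_on (p := fun S => ∃ ε1 > 0, ∀ ε, 0 < ε → ε < ε1 → ∀ z ∈ S,
      VF A f g ℓ u0 ε z ≤ ψ (z.1, z.2.2) + m + κ) ?_ ?_ ?_ ?_
  · exact ⟨1, one_pos, by simp⟩
  · rintro S S' hSS ⟨e, he, h⟩
    exact ⟨e, he, fun ε h1 h2 z hz => h ε h1 h2 z (hSS hz)⟩
  · rintro S S' ⟨e, he, h⟩ ⟨e', he', h'⟩
    refine ⟨min e e', by positivity, fun ε h1 h2 z hz => ?_⟩
    rw [lt_min_iff] at h2
    rcases hz with hz | hz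
    · exact h ε h1 h2.1 z hz
    · exact h' ε h1 h2.2 z hz
  · intro z hz
    obtain ⟨δ, hδ, hV⟩ := upperLim_lt (locBd_VF H C z.1 z.2.1 (hpos z hz))
      (c := ψ (z.1, z.2.2) + m + κ / 2) (by have := hle z hz; linarith)
    have hψc : Continuous fun w : Euc N × Euc M × ℝ => ψ (w.1, w.2.2) :=
      hψ.comp (by fun_prop)
    have hev : ∀ᶠ w in 𝓝 z, ψ (z.1, z.2.2) - κ / 2 < ψ (w.1, w.2.2) :=
      (hψc.tendsto z).eventually (lt_mem_nhds (by linarith))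
    refine ⟨ball z δ ∩ {w | ψ (z.1, z.2.2) - κ / 2 < ψ (w.1, w.2.2)},
      mem_nhdsWithin_of_mem_nhds (inter_mem (ball_mem_nhds z hδ) hev), δ, hδ, ?_⟩
    rintro ε h1 h2 w ⟨hw1, hw2⟩
    have h3 := hV ε h1 h2 w hw1
    have hw2 : ψ (z.1, z.2.2) - κ / 2 < ψ (w.1, w.2.2) := hw2
    linarith

lemma iterate_loop (H : DynHyp A f g L0 Q0) (C : CostHyp A Q0 ℓ u0)
    {x0 p : Euc N} {t0 b τ T ρ r ε κ : ℝ} {y0 : Euc M} {ψ : Euc N × ℝ → ℝ}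
    (hε : 0 < ε) (hrρ : r ≤ ρ) (hrt : r < t0)
    (hκ : κ * (Q0 + 1) ≤ b + τ) (hκ0 : 0 ≤ κ)
    (hψ : ∀ v v' : Euc N × ℝ, ‖v.1 - x0‖ ≤ r → |v.2 - t0| ≤ r → ‖v'.1 - x0‖ ≤ r →
      |v'.2 - t0| ≤ r →
      ψ v' - ψ v - ⟪p, v'.1 - v.1⟫ - τ * (v'.2 - v.2) ≤ κ * (‖v'.1 - v.1‖ + |v'.2 - v.2|))
    (hloop : ∀ z : Euc N × Euc M, ‖z.1 - x0‖ ≤ ρ → ‖z.2 - y0‖ ≤ ρ →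
      ∃ w : List (A × NNReal), wDur w ≤ T ∧
        wCost f g (LL f ℓ p b) ε w z ≤ -1 ∧ ‖(wEnd f g ε w z).2 - y0‖ ≤ ρ)
    (hT : 0 < T) (n : ℕ) (z : Euc N × Euc M) (t : ℝ)
    (hz1 : ‖z.1 - x0‖ + n * (ε * T * Q0) ≤ r) (hz2 : ‖z.2 - y0‖ ≤ ρ)
    (hz3 : |t - t0| + n * (ε * T) ≤ r) :
    ∃ (z' : Euc N × Euc M) (t' : ℝ), ‖z'.1 - x0‖ ≤ r ∧ ‖z'.2 - y0‖ ≤ ρ ∧ |t' - t0| ≤ r ∧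
      valueFun A f g ℓ u0 ε z.1 z.2 t - ψ (z.1, t) ≤
        valueFun A f g ℓ u0 ε z'.1 z'.2 t' - ψ (z'.1, t') - n * ε := by
  have hQ := H.Q0pos
  induction n generalizing z t with
  | zero => exact ⟨z, t, by simpa using hz1, hz2, by simpa using hz3, by simp⟩
  | succ n ih =>
    push_cast at hz1 hz3
    have hn1 : 0 ≤ n * (ε * T * Q0) := by positivity
    have hn2 : 0 ≤ n * (ε * T) := by positivity
    have hn3 : 0 < ε * T * Q0 := by positivity
    have hn4 : 0 < ε * T := by positivity
    obtain ⟨w, hw1, hw2, hw3⟩ := hloop z (by linarith) hz2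
    have hd0 := wDur_nonneg w
    set s := ε * wDur w with hs
    have hs0 : 0 ≤ s := by positivity
    have hsT : s ≤ ε * T := by rw [hs]; gcongr
    have hx := wEnd_fst_le H ε w z (f := f) (g := g)
    rw [abs_of_pos hε, mul_right_comm, ← hs] at hx
    have hsQ : s * Q0 ≤ ε * T * Q0 := by gcongr
    set z1 := wEnd f g ε w z with hz1def
    have hx1 := norm_sub_le_norm_sub_add_norm_sub z1.1 z.1 x0
    have ht1 : |t - s - t0| ≤ |t - t0| + s := by
      have := abs_sub_le (t - s) t t0
      rw [sub_sub_cancel_left, abs_neg, abs_of_nonneg hs0] at this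
      linarith
    obtain ⟨z', t', k1, k2, k3, k4⟩ := ih z1 (t - s) (by linarith) hw3 (by linarith)
    refine ⟨z', t', k1, k2, k3, ?_⟩
    have hts : s ≤ t := by
      have := neg_abs_le (t - t0)
      have hst' : |t - t0| + s ≤ r := by linarith
      linarith
    have hdpp := dpp_word H C hε w z (t := t) (u0 := u0) hts
    have hsplit := wCost_split H (ℓ := fun (a : A) z => ℓ z.1 z.2 a) (fun a => l_cont C a)
      p b ε w z
    rw [← hz1def, ← hs] at hdpp hsplit
    have hw2' : ε * wCost f g (LL f ℓ p b) ε w z ≤ ε * (-1) := by gcongr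
    have hsplit' : ε * wCost f g (LL f ℓ p b) ε w z =
      ε * wCost f g (fun (a : A) z => ℓ z.1 z.2 a) ε w z + ⟪p, z1.1 - z.1⟫ + b * s := hsplit
    have hψ1 := hψ (z.1, t) (z1.1, t - s) (by simp only; linarith) (by simp only; linarith)
      (by simp only; linarith) (by simp only; linarith)
    simp only [sub_sub_cancel_left, abs_neg, abs_of_nonneg hs0] at hψ1
    have h5 : κ * (‖z1.1 - z.1‖ + s) ≤ κ * (s * Q0 + s) := by gcongr
    have h6 : κ * (s * Q0 + s) ≤ (b + τ) * s := by nlinarith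
    push_cast
    linarith

end Loop

open Set MeasureTheory Metric Filter
open scoped RealInnerProductSpace Topology

section Final
variable {N M k : ℕ} {A : Set (Euc k)}
    {f : Euc N → Euc M → Euc k → Euc N} {g : Euc N → Euc M → Euc k → Euc M}
    {L0 Q0 : ℝ} {ℓ : Euc N → Euc M → Euc k → ℝ} {u0 : Euc N → Euc M → ℝ}

lemma partials {ψ : Euc N × ℝ → ℝ} (hψ : ContDiff ℝ 1 ψ) (x0 : Euc N) (t0 : ℝ)
    (v : Euc N × ℝ) :
    fderiv ℝ ψ (x0, t0) v = ⟪gradient (fun x => ψ (x, t0)) x0, v.1⟫ +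
      deriv (fun s => ψ (x0, s)) t0 * v.2 := by
  have hd : HasFDerivAt ψ (fderiv ℝ ψ (x0, t0)) (x0, t0) :=
    (hψ.differentiable one_ne_zero _).hasFDerivAt
  have h1 : HasFDerivAt (fun x => ψ (x, t0)) _ x0 :=
    HasFDerivAt.comp x0 hd (hasFDerivAt_prodMk_left x0 t0)
  have h2 : HasFDerivAt (fun s => ψ (x0, s)) _ t0 :=
    HasFDerivAt.comp t0 hd (hasFDerivAt_prodMk_right x0 t0)
  have e1 : ⟪gradient (fun x => ψ (x, t0)) x0, v.1⟫ = fderiv ℝ ψ (x0, t0) (v.1, 0) := by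
    simp [gradient, h1.fderiv]
  have e2 : deriv (fun s => ψ (x0, s)) t0 = fderiv ℝ ψ (x0, t0) (0, 1) := by
    rw [h2.hasDerivAt.deriv]
    simp
  have e3 : v = (v.1, 0) + v.2 • ((0 : Euc N), (1:ℝ)) := by
    ext <;> simp
  rw [e1, e2]
  conv_lhs => rw [e3, map_add, map_smul, smul_eq_mul]
  ring

lemma subsol (H : DynHyp A f g L0 Q0) (C : CostHyp A Q0 ℓ u0) :
    IsParabSubOn (effH A f g ℓ) (univ ×ˢ Ioi (0:ℝ))
      (fun w : Euc N × ℝ => upperLim (VF A f g ℓ u0) (w.1, (0 : Euc M), w.2)) := by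
  refine ⟨Vbar_usc H C, ?_⟩
  rintro ψ hψ ⟨x0, t0⟩ ⟨-, ht0⟩ hmax
  have ht0 : 0 < t0 := ht0
  simp only at hmax ⊢
  set p := gradient (fun x => ψ (x, t0)) x0 with hp
  set τ := deriv (fun s => ψ (x0, s)) t0 with hτ
  by_contra hcon
  push Not at hcon
  have hQ := H.Q0pos
  obtain ⟨b, hb1, hb2⟩ := exists_between (show -τ < effH A f g ℓ x0 p by linarith)
  obtain ⟨y0, T, hT, ρ, hρ, ε0, hε0, hloop⟩ := loop_exists H C x0 p b hb2
  set κ := (b + τ) / (Q0 + 1) with hκ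
  have hκp : 0 < κ := div_pos (by linarith) (by positivity)
  have hκQ : κ * (Q0 + 1) = b + τ := by rw [hκ]; field_simp
  -- strict differentiability
  have hstrict : ∀ᶠ q : (Euc N × ℝ) × (Euc N × ℝ) in 𝓝 ((x0, t0), (x0, t0)),
      ‖ψ q.1 - ψ q.2 - fderiv ℝ ψ (x0, t0) (q.1 - q.2)‖ ≤ κ * ‖q.1 - q.2‖ :=
    (hψ.contDiffAt.hasStrictFDerivAt one_ne_zero).isLittleO.def hκp
  obtain ⟨δ1, hδ1, hs1⟩ := Metric.eventually_nhds_iff.1 hstrict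
  -- local maximum
  have hmax' : ∀ᶠ w : Euc N × ℝ in 𝓝 (x0, t0), w ∈ (univ : Set (Euc N)) ×ˢ Ioi (0:ℝ) →
      upperLim (VF A f g ℓ u0) (w.1, (0 : Euc M), w.2) - ψ w ≤
      upperLim (VF A f g ℓ u0) (x0, (0 : Euc M), t0) - ψ (x0, t0) :=
    eventually_nhdsWithin_iff.1 hmax
  obtain ⟨δ2, hδ2, hs2⟩ := Metric.eventually_nhds_iff.1 hmax'
  set Vb := upperLim (VF A f g ℓ u0) (x0, (0 : Euc M), t0) with hVb
  set r := min (min (δ1 / 2) (δ2 / 2)) (min ρ (t0 / 2)) with hr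
  have hrp : 0 < r := by positivity
  have hr1 : r ≤ δ1 / 2 := (min_le_left _ _).trans (min_le_left _ _)
  have hr2 : r ≤ δ2 / 2 := (min_le_left _ _).trans (min_le_right _ _)
  have hr3 : r ≤ ρ := (min_le_right _ _).trans (min_le_left _ _)
  have hr4 : r ≤ t0 / 2 := (min_le_right _ _).trans (min_le_right _ _)
  clear_value r
  have hψ1 : ∀ v v' : Euc N × ℝ, ‖v.1 - x0‖ ≤ r → |v.2 - t0| ≤ r → ‖v'.1 - x0‖ ≤ r →
      |v'.2 - t0| ≤ r →
      ψ v' - ψ v - ⟪p, v'.1 - v.1⟫ - τ * (v'.2 - v.2) ≤ κ * (‖v'.1 - v.1‖ + |v'.2 - v.2|) := by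
    intro v v' h1 h2 h3 h4
    have h5 := @hs1 (v', v) (by
      rw [Prod.dist_eq, Prod.dist_eq, Prod.dist_eq, dist_eq_norm, dist_eq_norm, dist_eq_norm,
        dist_eq_norm, Real.norm_eq_abs, Real.norm_eq_abs]
      simp only
      refine max_lt (max_lt ?_ ?_) (max_lt ?_ ?_) <;> linarith)
    simp only at h5
    rw [partials hψ, ← hp, ← hτ, Prod.fst_sub, Prod.snd_sub] at h5
    have h6 : ‖v' - v‖ ≤ ‖v'.1 - v.1‖ + |v'.2 - v.2| := by
      rw [Prod.norm_def]
      have a1 := norm_nonneg (v'.1 - v.1)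
      have a2 := abs_nonneg (v'.2 - v.2)
      apply max_le
      · simp only [Prod.fst_sub]; linarith
      · simp only [Prod.snd_sub, Real.norm_eq_abs]; linarith
    have h7 := (le_abs_self _).trans h5
    have h8 : κ * ‖v' - v‖ ≤ κ * (‖v'.1 - v.1‖ + |v'.2 - v.2|) := by gcongr
    linarith
  set K : Set (Euc N × Euc M × ℝ) := closedBall x0 r ×ˢ (closedBall y0 ρ ×ˢ closedBall t0 r)
    with hKdef
  have hK : IsCompact K :=
    (isCompact_closedBall x0 r).prod ((isCompact_closedBall y0 ρ).prod (isCompact_closedBall t0 r))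
  have hKt : ∀ z ∈ K, 0 < z.2.2 := by
    rintro z ⟨-, -, h⟩
    rw [mem_closedBall, Real.dist_eq, abs_le] at h
    linarith [h.1]
  set h := r / (2 * (Q0 + 1)) with hh
  have hhp : 0 < h := by positivity
  have hhQ : h * Q0 + h = r / 2 := by rw [hh]; field_simp
  set κ2 := h / (8 * T) with hκ2
  have hκ2p : 0 < κ2 := by positivity
  have hhT : h / T = 8 * κ2 := by rw [hκ2]; field_simp
  obtain ⟨ε1, hε1, hup⟩ := unif_upper H C hψ.continuous hK hKt (m := Vb - ψ (x0, t0)) hκ2p (by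
    rintro ⟨x, y, t⟩ hz
    have htp := hKt _ hz
    obtain ⟨g1, -, g3⟩ := hz
    simp only [mem_closedBall] at htp g1 g3
    rw [yindep H C x y 0 htp]
    have := @hs2 (x, t) (by
      rw [Prod.dist_eq]
      exact max_lt (by simp only; linarith) (by simp only; linarith)) ⟨mem_univ _, htp⟩
    simp only at this ⊢
    linarith)
  have hψev : ∀ᶠ v in 𝓝 (x0, t0), ψ v < ψ (x0, t0) + κ2 :=
    (hψ.continuous.tendsto (x0, t0)).eventually (gt_mem_nhds (by linarith))
  obtain ⟨δ3, hδ3, hs3⟩ := Metric.eventually_nhds_iff.1 hψev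
  have hfin : upperLim (VF A f g ℓ u0) (x0, y0, t0) ≤ Vb - κ2 := by
    apply upperLim_le (locBd_VF H C x0 y0 ht0)
      (δ := min (min ε0 ε1) (min (min (r / 2) δ3) κ2)) (by positivity)
    rintro ε hε hεlt ⟨x, y, t⟩ hw
    have hεa : ε < ε0 := hεlt.trans_le ((min_le_left _ _).trans (min_le_left _ _))
    have hεb : ε < ε1 := hεlt.trans_le ((min_le_left _ _).trans (min_le_right _ _))
    have hεc : ε < κ2 := hεlt.trans_le ((min_le_right _ _).trans (min_le_right _ _))
    have hwr := hw.trans_le ((min_le_right _ _).trans ((min_le_left _ _).trans (min_le_left _ _)))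
    have hw3 := hw.trans_le ((min_le_right _ _).trans ((min_le_left _ _).trans (min_le_right _ _)))
    rw [dist_lt3] at hwr hw3
    obtain ⟨w1, w2, w3⟩ := hwr
    obtain ⟨v1, -, v3⟩ := hw3
    have hψx : ψ (x, t) < ψ (x0, t0) + κ2 := hs3 (by
      rw [Prod.dist_eq, dist_eq_norm, Real.dist_eq]
      exact max_lt v1 v3)
    set n := ⌊h / (ε * T)⌋₊ with hn
    have hn1 : (n:ℝ) * (ε * T) ≤ h := by
      have := Nat.floor_le (show 0 ≤ h / (ε * T) by positivity)
      rwa [le_div_iff₀ (by positivity)] at this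
    have hn2 : 7 * κ2 ≤ n * ε := by
      have := Nat.lt_floor_add_one (h / (ε * T))
      rw [← hn, div_lt_iff₀ (by positivity)] at this
      have h3 : h / T < (n + 1) * ε := by
        rw [div_lt_iff₀ hT]; linarith
      rw [hhT] at h3
      linarith
    have hn3 : (n:ℝ) * (ε * T * Q0) ≤ h * Q0 := by
      rw [← mul_assoc]; gcongr
    have hhQ' : 0 < h * Q0 := by positivity
    obtain ⟨z', t', k1, k2, k3, k4⟩ := iterate_loop H C (u0 := u0) hε hr3 (by linarith) hκQ.le
      hκp.le hψ1 (hloop ε hε hεa) hT n (x, y) t (by simp only; linarith)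
      (by simp only; linarith) (by linarith)
    have h5 := hup ε hε hεb (z'.1, z'.2, t') ⟨by simpa [dist_eq_norm] using k1,
      by simpa [dist_eq_norm] using k2, by simpa [Real.dist_eq] using k3⟩
    simp only [VF] at h5 k4 ⊢
    linarith
  rw [yindep H C x0 y0 0 ht0, ← hVb] at hfin
  linarith

end Final

theorem statement0
    {N M k : ℕ} (A : Set (Euc k)) (hA : IsCompact A) (hAne : A.Nonempty)
    (f : Euc N → Euc M → Euc k → Euc N) (g : Euc N → Euc M → Euc k → Euc M)
    (L0 Q0 : ℝ) (hL0 : 0 < L0) (hQ0 : 0 < Q0)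
    (hfLip : ∀ (x₁ x₂ : Euc N) (y₁ y₂ : Euc M), ∀ a ∈ A,
      ‖f x₁ y₁ a - f x₂ y₂ a‖ ≤ L0 * (‖x₁ - x₂‖ + ‖y₁ - y₂‖))
    (hgLip : ∀ (x₁ x₂ : Euc N) (y₁ y₂ : Euc M), ∀ a ∈ A,
      ‖g x₁ y₁ a - g x₂ y₂ a‖ ≤ L0 * (‖x₁ - x₂‖ + ‖y₁ - y₂‖))
    (hfBdd : ∀ x y, ∀ a ∈ A, ‖f x y a‖ ≤ Q0)
    (hctrl : ∀ K : Set (Euc N × Euc M), IsCompact K → ∃ r > 0, ∀ z ∈ K,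
      Metric.ball (0 : Euc M) r ⊆ closure (convexHull ℝ ((fun a => g z.1 z.2 a) '' A)))
    (ℓ : Euc N → Euc M → Euc k → ℝ)
    (hlCont : Continuous fun z : Euc N × Euc M × Euc k => ℓ z.1 z.2.1 z.2.2)
    (hlCoer : ∀ B : Set (Euc N), IsCompact B → ∀ c : ℝ, ∃ R : ℝ,
      ∀ y : Euc M, R < ‖y‖ → ∀ x ∈ B, ∀ a ∈ A, c < ℓ x y a)
    (u0 : Euc N → Euc M → ℝ)
    (hu0Cont : Continuous fun z : Euc N × Euc M => u0 z.1 z.2)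
    (hu0Bdd : ∀ x y, -Q0 ≤ u0 x y)
 :
    LocEquibounded (valueFun A f g ℓ u0) ∧
    (∀ (x0 : Euc N) (y0 z0 : Euc M) (t0 : ℝ), 0 < t0 →
      upperLim (fun ε (z : Euc N × Euc M × ℝ) => valueFun A f g ℓ u0 ε z.1 z.2.1 z.2.2)
        (x0, y0, t0) =
      upperLim (fun ε (z : Euc N × Euc M × ℝ) => valueFun A f g ℓ u0 ε z.1 z.2.1 z.2.2)
        (x0, z0, t0)) ∧
    IsParabSubOn (effH A f g ℓ) (univ ×ˢ Ioi (0:ℝ))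
      (fun w : Euc N × ℝ =>
        upperLim (fun ε (z : Euc N × Euc M × ℝ) => valueFun A f g ℓ u0 ε z.1 z.2.1 z.2.2)
          (w.1, (0 : Euc M), w.2)) ∧
    (∀ x0 : Euc N, ∀ c : ℝ, (⨅ y : Euc M, u0 x0 y) < c →
      ∀ᶠ w : Euc N × ℝ in 𝓝[{w : Euc N × ℝ | 0 < w.2}] (x0, 0),
        upperLim (fun ε (z : Euc N × Euc M × ℝ) => valueFun A f g ℓ u0 ε z.1 z.2.1 z.2.2)
          (w.1, (0 : Euc M), w.2) < c) := by
  have H : DynHyp A f g L0 Q0 := ⟨hA, hAne, hL0, hQ0, hfLip, hgLip, hfBdd, hctrl⟩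
  have C : CostHyp A Q0 ℓ u0 := ⟨hlCont, hlCoer, hu0Cont, hu0Bdd⟩
  exact ⟨locEquibounded H C, fun x0 y0 z0 t0 ht0 => yindep H C x0 y0 z0 ht0, subsol H C,
    init_cond H C⟩
end

section
/- Under assumptions (H1)–(H3), for every R1, R2 > 0 there exist constants T0 > 0 and P > 0, depending only on R1, R2 and the data, such that for every x ∈ B(0,R1) ⊆ ℝ^N, every y, z ∈ B(0,R2) ⊆ ℝ^M, and every ε ∈ (0,1], there are a control α, a trajectory (ξ_ε, η_ε) of (CD_ε) with (ξ_ε(0), η_ε(0)) = (x,y), and a time T_ε with T0 < T_ε < 3 T0 such that |η_ε(T_ε) − z| ≤ P ε. -/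
open Set MeasureTheory Metric Filter
open scoped RealInnerProductSpace Topology

lemma aux_step {E : Type*} [NormedAddCommGroup E] [NormedSpace ℝ E] [CompleteSpace E]
    (F : E → E) (L : NNReal) (hF : LipschitzWith L F) (X0 : E) (h : ℝ) (hh : 0 < h)
    (hL : h * (1 + L) ≤ 1) :
    ∃ φ : ℝ → E, Continuous φ ∧ (∀ t ∈ Icc 0 h, φ t = X0 + ∫ τ in (0:ℝ)..t, F (φ τ)) ∧
      ‖φ h - X0 - h • F X0‖ ≤ L * (1 + L) * (‖F X0‖ + 1) * h ^ 2 := by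
  let a : NNReal := ‖F X0‖₊ + 1
  have ha : (a : ℝ) = ‖F X0‖ + 1 := by simp [a]
  have hb : ∀ x ∈ closedBall X0 (a:ℝ), ‖F x‖ ≤ (1 + L) * a := by
    intro x hx
    have h1 : ‖F x - F X0‖ ≤ L * ‖x - X0‖ := hF.norm_sub_le x X0
    have h2 : ‖x - X0‖ ≤ a := by simpa [dist_eq_norm] using hx
    have h3 : ‖F x‖ ≤ ‖F X0‖ + ‖F x - F X0‖ := by
      have := norm_add_le (F X0) (F x - F X0); simpa using this
    have h4 : (L:ℝ) * ‖x - X0‖ ≤ L * a := by gcongr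
    nlinarith
  let t0 : Icc (0:ℝ) h := ⟨0, by simp [hh.le]⟩
  have hpl : IsPicardLindelof (fun _ => F) t0 X0 a 0 ((1 + L) * a) L := by
    refine ⟨fun t _ => hF.lipschitzOnWith, fun x _ => continuousOn_const, fun t _ x hx => ?_, ?_⟩
    · simpa using hb x hx
    · simp only [t0, sub_zero, sub_self, NNReal.coe_mul, NNReal.coe_add, NNReal.coe_one,
        NNReal.coe_zero]
      rw [max_eq_left hh.le]
      have : (0:ℝ) ≤ a := a.2
      nlinarith
  have hx : X0 ∈ closedBall X0 ((0:NNReal):ℝ) := by simp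
  obtain ⟨α, hα⟩ := ODE.FunSpace.exists_isFixedPt_next hpl hx
  have hmem : ∀ t, α.compProj t ∈ closedBall X0 (a:ℝ) := fun t => α.mem_closedBall hpl.mul_max_le
  have heq : ∀ t ∈ Icc 0 h, α.compProj t = X0 + ∫ τ in (0:ℝ)..t, F (α.compProj τ) := by
    intro t ht
    rw [ODE.FunSpace.compProj_of_mem ht]
    conv_lhs => rw [← hα]
    rw [ODE.FunSpace.next_apply]
    rfl
  have hc : Continuous α.compProj := α.continuous_compProj
  have hFc : Continuous (fun t => F (α.compProj t)) := hF.continuous.comp hc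
  have hdisp : ∀ t ∈ Icc 0 h, ‖α.compProj t - X0‖ ≤ (1 + L) * a * h := by
    intro t ht
    rw [heq t ht, add_sub_cancel_left]
    have := intervalIntegral.norm_integral_le_of_norm_le_const (a := 0) (b := t)
      (f := fun τ => F (α.compProj τ)) (C := (1 + L) * a) (fun τ _ => hb _ (hmem τ))
    refine this.trans ?_
    rw [sub_zero, abs_of_nonneg ht.1]
    gcongr
    exact ht.2
  refine ⟨α.compProj, hc, heq, ?_⟩
  have e1 : α.compProj h - X0 - h • F X0 = ∫ τ in (0:ℝ)..h, (F (α.compProj τ) - F X0) := by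
    rw [intervalIntegral.integral_sub (hFc.intervalIntegrable _ _) (by simp),
      heq h ⟨hh.le, le_rfl⟩]
    simp
  rw [e1]
  have := intervalIntegral.norm_integral_le_of_norm_le_const (a := 0) (b := h)
      (f := fun τ => F (α.compProj τ) - F X0) (C := L * ((1 + L) * a * h)) (fun τ hτ => by
        rw [uIoc_of_le hh.le] at hτ
        refine (hF.norm_sub_le _ _).trans ?_
        gcongr
        exact hdisp τ ⟨hτ.1.le, hτ.2⟩)
  refine this.trans (le_of_eq ?_)
  rw [sub_zero, abs_of_pos hh, ha]; ring

lemma aux_concat {E ι : Type*} [NormedAddCommGroup E] [NormedSpace ℝ E] [CompleteSpace E]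
    (F : ι → E → E) (L : NNReal) (hF : ∀ i, LipschitzWith L (F i)) (κ : ℕ → E → ι)
    (X0 : E) (h : ℝ) (hh : 0 < h) (hL : h * (1 + L) ≤ 1) :
    ∃ (a : ℕ → ι) (X : ℝ → E), X 0 = X0 ∧ (∀ n : ℕ, a n = κ n (X (n * h))) ∧
      (∀ t, 0 ≤ t → IntervalIntegrable (fun s => F (a (⌈s / h⌉₊ - 1)) (X s)) volume 0 t ∧
        X t = X0 + ∫ s in (0:ℝ)..t, F (a (⌈s / h⌉₊ - 1)) (X s)) ∧
      (∀ n : ℕ, ‖X ((n + 1 : ℕ) * h) - X (n * h) - h • F (a n) (X (n * h))‖ ≤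
        L * (1 + L) * (‖F (a n) (X (n * h))‖ + 1) * h ^ 2) := by
  choose S hSc hSeq hSerr using fun (i : ι) (x : E) => aux_step (F i) L (hF i) x h hh hL
  let Xs : ℕ → E := fun n => Nat.rec X0 (fun n x => S (κ n x) x h) n
  have hXs0 : Xs 0 = X0 := rfl
  have hXsS : ∀ n, Xs (n + 1) = S (κ n (Xs n)) (Xs n) h := fun n => rfl
  let a : ℕ → ι := fun n => κ n (Xs n)
  let X : ℝ → E := fun t => S (a (⌈t / h⌉₊ - 1)) (Xs (⌈t / h⌉₊ - 1)) (t - (⌈t / h⌉₊ - 1 : ℕ) * h)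
  have hS0 : ∀ i x, S i x 0 = x := fun i x => by simpa using hSeq i x 0 ⟨le_rfl, hh.le⟩
  have hceil : ∀ (n : ℕ) (t : ℝ), t ∈ Ioc (n * h) ((n + 1 : ℕ) * h) → ⌈t / h⌉₊ - 1 = n := by
    intro n t ht
    have : ⌈t / h⌉₊ = n + 1 := by
      rw [Nat.ceil_eq_iff (by omega)]
      constructor
      · rw [lt_div_iff₀ hh]; simpa using ht.1
      · rw [div_le_iff₀ hh]; exact ht.2
    omega
  have hXIoc : ∀ (n : ℕ) (t : ℝ), t ∈ Ioc (n * h) ((n + 1 : ℕ) * h) →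
      X t = S (a n) (Xs n) (t - n * h) := by
    intro n t ht
    simp only [X]
    rw [hceil n t ht]
  have hXn : ∀ n : ℕ, X (n * h) = Xs n := by
    intro n
    cases n with
    | zero => simp [X, hS0, hXs0]
    | succ n =>
      rw [hXIoc n _ ⟨by push_cast; nlinarith, le_rfl⟩, hXsS]
      congr 1
      push_cast; ring
  have hX0 : X 0 = X0 := by
    have := hXn 0
    rw [hXs0] at this
    simpa using this
  have hpiece : ∀ (n : ℕ) (t : ℝ), t ∈ Ioc (n * h) ((n + 1 : ℕ) * h) →
      IntervalIntegrable (fun s => F (a (⌈s / h⌉₊ - 1)) (X s)) volume (n * h) t ∧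
        X t = Xs n + ∫ s in (n * h : ℝ)..t, F (a (⌈s / h⌉₊ - 1)) (X s) := by
    intro n t ht
    have hcong : EqOn (fun s => F (a n) (S (a n) (Xs n) (s - n * h)))
        (fun s => F (a (⌈s / h⌉₊ - 1)) (X s)) (uIoc (n * h) t) := by
      intro s hs
      rw [uIoc_of_le ht.1.le] at hs
      have hs' : s ∈ Ioc (n * h) ((n + 1 : ℕ) * h) := ⟨hs.1, hs.2.trans ht.2⟩
      simp only
      rw [hceil n s hs', hXIoc n s hs']
    have hcont : Continuous (fun s => F (a n) (S (a n) (Xs n) (s - n * h))) :=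
      (hF _).continuous.comp ((hSc _ _).comp (by fun_prop))
    refine ⟨(hcont.intervalIntegrable _ _).congr hcong, ?_⟩
    rw [← intervalIntegral.integral_congr_ae (ae_of_all _ hcong), hXIoc n t ht,
      hSeq _ _ _ ⟨by linarith [ht.1], by have := ht.2; push_cast at this; linarith⟩,
      intervalIntegral.integral_comp_sub_right (fun s => F (a n) (S (a n) (Xs n) s))]
    simp
  have hall : ∀ n : ℕ, ∀ t, 0 ≤ t → t ≤ n * h →
      IntervalIntegrable (fun s => F (a (⌈s / h⌉₊ - 1)) (X s)) volume 0 t ∧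
        X t = X0 + ∫ s in (0:ℝ)..t, F (a (⌈s / h⌉₊ - 1)) (X s) := by
    intro n
    induction n with
    | zero =>
      intro t h0 h1
      have : t = 0 := by simp at h1; linarith
      subst this
      simp [hX0]
    | succ n ih =>
      intro t h0 h1
      rcases le_or_gt t (n * h) with h2 | h2
      · exact ih t h0 h2
      · obtain ⟨i1, i2⟩ := ih (n * h) (by positivity) le_rfl
        obtain ⟨j1, j2⟩ := hpiece n t ⟨h2, h1⟩
        refine ⟨i1.trans j1, ?_⟩
        rw [j2, ← hXn, i2, add_assoc, intervalIntegral.integral_add_adjacent_intervals i1 j1]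
  refine ⟨a, X, hX0, fun n => by rw [hXn], fun t ht => ?_, fun n => ?_⟩
  · refine hall ⌈t / h⌉₊ t ht ?_
    rw [← div_le_iff₀ hh]; exact Nat.le_ceil _
  · rw [hXn, hXn, hXsS]
    exact hSerr _ _

lemma aux_select {N M k : ℕ} (A : Set (Euc k)) (hAne : A.Nonempty)
    (g : Euc N → Euc M → Euc k → Euc M) (L0 : ℝ) (hL0 : 0 < L0)
    (hgLip : ∀ (x₁ x₂ : Euc N) (y₁ y₂ : Euc M), ∀ a ∈ A,
      ‖g x₁ y₁ a - g x₂ y₂ a‖ ≤ L0 * (‖x₁ - x₂‖ + ‖y₁ - y₂‖))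
    (hctrl : ∀ K : Set (Euc N × Euc M), IsCompact K → ∃ r > 0, ∀ z ∈ K,
      Metric.ball (0 : Euc M) r ⊆ closure (convexHull ℝ ((fun a => g z.1 z.2 a) '' A)))
    (ρ1 ρ2 : ℝ) :
    ∃ r > 0, ∃ G ≥ 0, ∀ (X : Euc N × Euc M) (v e : Euc M), ‖X.1‖ ≤ ρ1 → ‖X.2‖ ≤ ρ2 → ‖v‖ ≤ r →
      ∃ a ∈ A, ⟪e, g X.1 X.2 a - v⟫ ≤ 0 ∧ ‖g X.1 X.2 a‖ ≤ G := by
  obtain ⟨a0, ha0⟩ := hAne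
  let K : Set (Euc N × Euc M) := closedBall 0 ρ1 ×ˢ closedBall 0 ρ2
  have hK : IsCompact K := (isCompact_closedBall _ _).prod (isCompact_closedBall _ _)
  obtain ⟨r, hr, hball⟩ := hctrl K hK
  have hcont : ∀ a ∈ A, Continuous (fun X : Euc N × Euc M => g X.1 X.2 a) := by
    intro a ha
    refine (LipschitzWith.of_dist_le_mul (K := ⟨2 * L0, by positivity⟩) fun X Y => ?_).continuous
    rw [dist_eq_norm, dist_eq_norm]
    refine (hgLip _ _ _ _ a ha).trans ?_
    have h1 := norm_fst_le (X - Y)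
    have h2 := norm_snd_le (X - Y)
    simp only [Prod.fst_sub, Prod.snd_sub] at h1 h2
    change _ ≤ 2 * L0 * ‖X - Y‖
    nlinarith
  have hpt : ∀ X ∈ K, ∀ e : Euc M, ‖e‖ = 1 → ∃ a ∈ A, ⟪e, g X.1 X.2 a⟫ < -(r / 2) := by
    intro X hX e he
    by_contra! hcon
    have hsub : closure (convexHull ℝ ((fun a => g X.1 X.2 a) '' A)) ⊆
        {w : Euc M | -(r / 2) ≤ ⟪e, w⟫} := by
      refine closure_minimal (convexHull_min ?_ ?_) ?_
      · rintro _ ⟨a, ha, rfl⟩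
        exact hcon a ha
      · exact convex_halfSpace_ge (IsLinearMap.mk (fun x y => inner_add_right _ _ _)
          (fun c x => by simp [inner_smul_right])) _
      · exact isClosed_le continuous_const (by fun_prop)
    have hm : (-(3 * r / 4)) • e ∈ Metric.ball (0 : Euc M) r := by
      rw [mem_ball_zero_iff, norm_smul, he, Real.norm_eq_abs, abs_neg, abs_of_pos (by positivity)]
      linarith
    have := hsub (hball X hX hm)
    simp only [Set.mem_ofPred_eq, inner_smul_right, real_inner_self_eq_norm_sq, he] at this
    linarith
  have hcomp : ∃ G : ℝ, ∀ p ∈ K ×ˢ sphere (0 : Euc M) 1, ∃ a ∈ A,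
      ⟪p.2, g p.1.1 p.1.2 a⟫ < -(r / 2) ∧ ‖g 0 0 a‖ ≤ G := by
    refine (hK.prod (isCompact_sphere (0 : Euc M) 1)).induction_on
      (p := fun S => ∃ G : ℝ, ∀ p ∈ S, ∃ a ∈ A,
      ⟪p.2, g p.1.1 p.1.2 a⟫ < -(r / 2) ∧ ‖g 0 0 a‖ ≤ G) ⟨0, by simp⟩ ?_ ?_ ?_
    · rintro s t hst ⟨G, hG⟩
      exact ⟨G, fun p hp => hG p (hst hp)⟩
    · rintro s t ⟨G, hG⟩ ⟨G', hG'⟩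
      refine ⟨max G G', ?_⟩
      rintro p (hp | hp)
      · obtain ⟨a, h1, h2, h3⟩ := hG p hp
        exact ⟨a, h1, h2, h3.trans (le_max_left _ _)⟩
      · obtain ⟨a, h1, h2, h3⟩ := hG' p hp
        exact ⟨a, h1, h2, h3.trans (le_max_right _ _)⟩
    · rintro ⟨X, e⟩ ⟨hX, he⟩
      obtain ⟨a, ha, hlt⟩ := hpt X hX e (by simpa using he)
      refine ⟨{p | ⟪p.2, g p.1.1 p.1.2 a⟫ < -(r / 2)}, ?_, ‖g 0 0 a‖, fun p hp => ⟨a, ha, hp, le_rfl⟩⟩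
      refine mem_nhdsWithin_of_mem_nhds (IsOpen.mem_nhds (isOpen_lt ?_ continuous_const) hlt)
      exact continuous_snd.inner ((hcont a ha).comp continuous_fst)
  obtain ⟨G, hG⟩ := hcomp
  have hgb : ∀ X : Euc N × Euc M, ‖X.1‖ ≤ ρ1 → ‖X.2‖ ≤ ρ2 → ∀ a ∈ A,
      ‖g X.1 X.2 a‖ ≤ ‖g 0 0 a‖ + L0 * (|ρ1| + |ρ2|) := by
    intro X h1 h2 a ha
    have h3 := hgLip X.1 0 X.2 0 a ha
    have h4 : ‖g X.1 X.2 a‖ ≤ ‖g 0 0 a‖ + ‖g X.1 X.2 a - g 0 0 a‖ := by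
      simpa using norm_add_le (g 0 0 a) (g X.1 X.2 a - g 0 0 a)
    have h5 := le_abs_self ρ1
    have h6 := le_abs_self ρ2
    simp only [sub_zero] at h3
    nlinarith
  refine ⟨r / 2, by positivity, |G| + ‖g 0 0 a0‖ + L0 * (|ρ1| + |ρ2|), by positivity, ?_⟩
  intro X v e h1 h2 hv
  by_cases he : e = 0
  · refine ⟨a0, ha0, by simp [he], (hgb X h1 h2 a0 ha0).trans ?_⟩
    linarith [abs_nonneg G]
  · have hen : 0 < ‖e‖ := norm_pos_iff.2 he
    obtain ⟨a, ha, hlt, hGa⟩ := hG (X, ‖e‖⁻¹ • e) ⟨⟨by simpa using h1, by simpa using h2⟩, by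
      simp [norm_smul, hen.ne']⟩
    refine ⟨a, ha, ?_, (hgb X h1 h2 a ha).trans ?_⟩
    · simp only [real_inner_smul_left] at hlt
      have h3 : ⟪e, g X.1 X.2 a⟫ ≤ -(r / 2) * ‖e‖ := by
        rw [inv_mul_eq_div, div_lt_iff₀ hen] at hlt
        exact hlt.le
      have h4 : -⟪e, v⟫ ≤ ‖e‖ * ‖v‖ := (neg_le_abs _).trans (abs_real_inner_le_norm e v)
      rw [inner_sub_right]
      nlinarith
    · linarith [le_abs_self G, norm_nonneg (g 0 0 a0)]

set_option maxHeartbeats 1000000 in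
lemma aux_track {N M k : ℕ} (A : Set (Euc k)) (hAne : A.Nonempty)
    (f : Euc N → Euc M → Euc k → Euc N) (g : Euc N → Euc M → Euc k → Euc M)
    (L0 Q0 : ℝ) (hL0 : 0 < L0) (hQ0 : 0 < Q0)
    (hfLip : ∀ (x₁ x₂ : Euc N) (y₁ y₂ : Euc M), ∀ a ∈ A,
      ‖f x₁ y₁ a - f x₂ y₂ a‖ ≤ L0 * (‖x₁ - x₂‖ + ‖y₁ - y₂‖))
    (hgLip : ∀ (x₁ x₂ : Euc N) (y₁ y₂ : Euc M), ∀ a ∈ A,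
      ‖g x₁ y₁ a - g x₂ y₂ a‖ ≤ L0 * (‖x₁ - x₂‖ + ‖y₁ - y₂‖))
    (hfBdd : ∀ x y, ∀ a ∈ A, ‖f x y a‖ ≤ Q0)
    (hctrl : ∀ K : Set (Euc N × Euc M), IsCompact K → ∃ r > 0, ∀ z ∈ K,
      Metric.ball (0 : Euc M) r ⊆ closure (convexHull ℝ ((fun a => g z.1 z.2 a) '' A)))
    (ρ1 ρ2 : ℝ) :
    ∃ r > 0, ∀ (x : Euc N) (y v : Euc M) (ε T δ : ℝ), 0 < ε → ε ≤ 1 → 0 < T → 0 < δ → δ ≤ 1 →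
      ‖v‖ ≤ r → ‖x‖ + ε * Q0 * T ≤ ρ1 → (∀ t ∈ Icc 0 T, ‖y + t • v‖ + 1 ≤ ρ2) →
      ∃ (α : ℝ → Euc k) (ξ : ℝ → Euc N) (η : ℝ → Euc M),
          IsControl A α ∧ IsTrajectory f g ε α ξ η ∧ ξ 0 = x ∧ η 0 = y ∧
          ‖η T - (y + T • v)‖ ≤ δ := by
  obtain ⟨r, hr, G, hG0, hsel⟩ := aux_select A hAne g L0 hL0 hgLip hctrl ρ1 ρ2
  refine ⟨r, hr, ?_⟩
  intro x y v ε T δ hε hε1 hT hδ hδ1 hv hx hy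
  obtain ⟨a0, ha0⟩ := hAne
  let L : NNReal := ⟨2 * L0, by positivity⟩
  have hLv : (L : ℝ) = 2 * L0 := rfl
  let F : A → (Euc N × Euc M) → (Euc N × Euc M) := fun a X => (ε • f X.1 X.2 a, g X.1 X.2 a)
  have hF : ∀ a, LipschitzWith L (F a) := by
    intro a
    refine LipschitzWith.of_dist_le_mul fun X Y => ?_
    rw [dist_eq_norm, dist_eq_norm, hLv]
    have h1 := norm_fst_le (X - Y)
    have h2 := norm_snd_le (X - Y)
    simp only [Prod.fst_sub, Prod.snd_sub] at h1 h2
    have h3 := hfLip X.1 Y.1 X.2 Y.2 a a.2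
    have h4 := hgLip X.1 Y.1 X.2 Y.2 a a.2
    have h5 : L0 * (‖X.1 - Y.1‖ + ‖X.2 - Y.2‖) ≤ 2 * L0 * ‖X - Y‖ := by nlinarith
    rw [Prod.norm_def]
    refine max_le ?_ (h4.trans h5)
    simp only [F, Prod.fst_sub, ← smul_sub, norm_smul, Real.norm_eq_abs, abs_of_pos hε]
    have := norm_nonneg (f X.1 X.2 a - f Y.1 Y.2 a)
    nlinarith
  set D : ℝ := L * (1 + L) * (Q0 + G + 1) with hD
  have hD0 : 0 ≤ D := by positivity
  set W : ℝ := G + r + D with hW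
  set C : ℝ := 2 * D + W ^ 2 with hC
  have hC0 : 0 ≤ C := by positivity
  obtain ⟨m, hm⟩ := exists_nat_gt (T * (1 + L) + C * T ^ 2 / δ ^ 2)
  have hmpos : (0:ℝ) < m := lt_of_le_of_lt (by positivity) hm
  have hm1 : T * (1 + L) ≤ m := by
    have : 0 ≤ C * T ^ 2 / δ ^ 2 := by positivity
    linarith
  have hm2 : C * T ^ 2 ≤ m * δ ^ 2 := by
    rw [← div_le_iff₀ (by positivity)]
    have : 0 ≤ T * (1 + L) := by positivity
    linarith
  set h : ℝ := T / m with hh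
  have hh0 : 0 < h := by positivity
  have hmh : m * h = T := by rw [hh]; field_simp
  have hL : h * (1 + L) ≤ 1 := by
    rw [hh, div_mul_eq_mul_div, div_le_one hmpos]; exact hm1
  have hh1 : h ≤ 1 := by
    have : (0:ℝ) ≤ L := L.2
    nlinarith
  have hCh : C * T * h ≤ δ ^ 2 := by
    rw [hh, ← mul_div_assoc, div_le_iff₀ hmpos]; linarith
  -- feedback
  have hκ : ∀ (n : ℕ) (X : Euc N × Euc M), ∃ a : A, ‖X.1‖ ≤ ρ1 → ‖X.2‖ ≤ ρ2 →
      ⟪X.2 - (y + (n * h : ℝ) • v), g X.1 X.2 a - v⟫ ≤ 0 ∧ ‖g X.1 X.2 a‖ ≤ G := by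
    intro n X
    by_cases hX : ‖X.1‖ ≤ ρ1 ∧ ‖X.2‖ ≤ ρ2
    · obtain ⟨a, ha, h1⟩ := hsel X v (X.2 - (y + (n * h : ℝ) • v)) hX.1 hX.2 hv
      exact ⟨⟨a, ha⟩, fun _ _ => h1⟩
    · exact ⟨⟨a0, ha0⟩, fun h1 h2 => absurd ⟨h1, h2⟩ hX⟩
  choose κ hκ using hκ
  obtain ⟨a, X, hX0, ha, hint, herr⟩ := aux_concat F L hF κ (x, y) h hh0 hL
  let α : ℝ → Euc k := fun s => (a (⌈s / h⌉₊ - 1) : Euc k)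
  have hmeas : Measurable α := by
    have h1 : Measurable (fun n : ℕ => (a (n - 1) : Euc k)) := measurable_from_top
    exact h1.comp (Nat.measurable_ceil.comp (measurable_id.div_const h))
  have hi1 : ∀ t, 0 ≤ t →
      IntervalIntegrable (fun s => ε • f (X s).1 (X s).2 (α s)) volume 0 t := by
    intro t ht
    have := (hint t ht).1
    exact ⟨this.1.fst, this.2.fst⟩
  have hi2 : ∀ t, 0 ≤ t →
      IntervalIntegrable (fun s => g (X s).1 (X s).2 (α s)) volume 0 t := by
    intro t ht
    have := (hint t ht).1
    exact ⟨this.1.snd, this.2.snd⟩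
  have htraj : IsTrajectory f g ε α (fun t => (X t).1) (fun t => (X t).2) := by
    refine ⟨fun t ht => ?_, hi2, fun t ht => ?_, fun t ht => ?_⟩
    · have := (hi1 t ht).smul ε⁻¹
      refine this.congr fun s _ => ?_
      simp [smul_smul, hε.ne']
    · have h1 := congrArg (ContinuousLinearMap.fst ℝ (Euc N) (Euc M)) (hint t ht).2
      rw [map_add, ← ContinuousLinearMap.intervalIntegral_comp_comm _ (hint t ht).1] at h1
      simp only [ContinuousLinearMap.coe_fst', F] at h1
      simp only [hX0]
      rw [h1, intervalIntegral.integral_smul]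
    · have h1 := congrArg (ContinuousLinearMap.snd ℝ (Euc N) (Euc M)) (hint t ht).2
      rw [map_add, ← ContinuousLinearMap.intervalIntegral_comp_comm _ (hint t ht).1] at h1
      simp only [ContinuousLinearMap.coe_snd', F] at h1
      simp only [hX0]
      rw [h1]
  have hξ : ∀ t, 0 ≤ t → t ≤ T → ‖(X t).1‖ ≤ ρ1 := by
    intro t ht htT
    have h1 := htraj.2.2.1 t ht
    simp only [hX0] at h1
    have h2 := intervalIntegral.norm_integral_le_of_norm_le_const (a := 0) (b := t)
      (f := fun s => f (X s).1 (X s).2 (α s)) (C := Q0) (fun s _ => hfBdd _ _ _ (a _).2)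
    rw [sub_zero, abs_of_nonneg ht] at h2
    rw [h1]
    refine (norm_add_le _ _).trans (le_trans ?_ hx)
    rw [norm_smul, Real.norm_eq_abs, abs_of_pos hε, mul_assoc]
    gcongr
    exact h2.trans (by gcongr)
  have hmain : ∀ n : ℕ, n ≤ m → ‖(X (n * h)).2 - (y + (n * h : ℝ) • v)‖ ^ 2 ≤ C * n * h ^ 2 := by
    intro n
    induction n with
    | zero => intro _; simp [hX0]
    | succ n ih =>
      intro hn
      have ih := ih (by omega)
      have hnm : (n : ℝ) ≤ m := by exact_mod_cast (by omega : n ≤ m)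
      have hnT : n * h ≤ T := by rw [← hmh]; gcongr
      have hn0 : 0 ≤ n * h := by positivity
      set e := (X (n * h)).2 - (y + (n * h : ℝ) • v) with he
      have he1 : ‖e‖ ≤ 1 := by
        have : C * n * h ^ 2 ≤ δ ^ 2 := by
          have h1 : C * (n * h) * h ≤ C * T * h := by gcongr
          have h1' : C * n * h ^ 2 = C * (n * h) * h := by ring
          linarith
        have h1 : δ ^ 2 ≤ 1 := pow_le_one₀ hδ.le hδ1
        have h2 : ‖e‖ ^ 2 ≤ 1 ^ 2 := by rw [one_pow]; linarith
        exact abs_le_of_sq_le_sq' h2 zero_le_one |>.2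
      have hb1 : ‖(X (n * h)).1‖ ≤ ρ1 := hξ _ hn0 hnT
      have hb2 : ‖(X (n * h)).2‖ ≤ ρ2 := by
        have h1 := hy (n * h) ⟨hn0, hnT⟩
        have h2 : (X (n * h)).2 = e + (y + (n * h : ℝ) • v) := by rw [he]; abel
        rw [h2]
        exact (norm_add_le _ _).trans (by linarith)
      obtain ⟨hk1, hk2⟩ := hκ n (X (n * h)) hb1 hb2
      rw [← ha n, ← he] at hk1
      rw [← ha n] at hk2
      set u := g (X (n * h)).1 (X (n * h)).2 (a n) - v with hu
      have herrn := herr n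
      have hFb : ‖F (a n) (X (n * h))‖ ≤ Q0 + G := by
        rw [Prod.norm_def]
        refine max_le ?_ ?_
        · simp only [F, norm_smul, Real.norm_eq_abs, abs_of_pos hε]
          have h1 := hfBdd (X (n * h)).1 (X (n * h)).2 _ (a n).2
          have h2 := norm_nonneg (f (X (n * h)).1 (X (n * h)).2 (a n))
          nlinarith
        · simp only [F]
          linarith
      have herr2 : ‖(X ((n + 1 : ℕ) * h)).2 - (X (n * h)).2
          - h • g (X (n * h)).1 (X (n * h)).2 (a n)‖ ≤ D * h ^ 2 := by
        have h1 := (norm_snd_le _).trans herrn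
        simp only [Prod.snd_sub, Prod.smul_snd, F] at h1
        refine h1.trans ?_
        rw [hD]
        gcongr
      set q := (X ((n + 1 : ℕ) * h)).2 - (X (n * h)).2
          - h • g (X (n * h)).1 (X (n * h)).2 (a n) with hq
      have hstep : (X ((n + 1 : ℕ) * h)).2 - (y + ((n + 1 : ℕ) * h : ℝ) • v) = e + (h • u + q) := by
        rw [hq, hu, he]
        push_cast
        module
      rw [hstep, norm_add_sq_real, inner_add_right, inner_smul_right]
      have i1 : ⟪e, q⟫ ≤ D * h ^ 2 := by
        refine (real_inner_le_norm e q).trans ?_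
        have h1 : ‖e‖ * ‖q‖ ≤ 1 * ‖q‖ := by gcongr
        linarith
      have i2 : ‖h • u + q‖ ≤ h * W := by
        refine (norm_add_le _ _).trans ?_
        rw [norm_smul, Real.norm_eq_abs, abs_of_pos hh0]
        have h1 : ‖u‖ ≤ G + r := (norm_sub_le _ _).trans (add_le_add hk2 hv)
        have h2 : h * ‖u‖ ≤ h * (G + r) := by gcongr
        have h3 : D * h ^ 2 ≤ D * h := by
          have : h ^ 2 ≤ h := by nlinarith
          gcongr
        have h4 : h * W = h * (G + r) + D * h := by rw [hW]; ring
        linarith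
      have i3 : ‖h • u + q‖ ^ 2 ≤ (h * W) ^ 2 := by gcongr
      have i4 : h * ⟪e, u⟫ ≤ 0 := mul_nonpos_of_nonneg_of_nonpos hh0.le hk1
      push_cast
      have i5 : C * (n + 1) * h ^ 2 = C * n * h ^ 2 + 2 * (D * h ^ 2) + (h * W) ^ 2 := by
        rw [hC]; ring
      linarith
  refine ⟨α, fun t => (X t).1, fun t => (X t).2, ⟨hmeas, fun t => (a _).2⟩, htraj,
    by simp [hX0], by simp [hX0], ?_⟩
  have h1 := hmain m le_rfl
  rw [hmh] at h1
  have h2 : C * m * h ^ 2 = C * T * h := by rw [← hmh]; ring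
  exact abs_le_of_sq_le_sq' (by linarith) hδ.le |>.2

theorem statement3
    {N M k : ℕ} (A : Set (Euc k)) (hA : IsCompact A) (hAne : A.Nonempty)
    (f : Euc N → Euc M → Euc k → Euc N) (g : Euc N → Euc M → Euc k → Euc M)
    (L0 Q0 : ℝ) (hL0 : 0 < L0) (hQ0 : 0 < Q0)
    (hfLip : ∀ (x₁ x₂ : Euc N) (y₁ y₂ : Euc M), ∀ a ∈ A,
      ‖f x₁ y₁ a - f x₂ y₂ a‖ ≤ L0 * (‖x₁ - x₂‖ + ‖y₁ - y₂‖))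
    (hgLip : ∀ (x₁ x₂ : Euc N) (y₁ y₂ : Euc M), ∀ a ∈ A,
      ‖g x₁ y₁ a - g x₂ y₂ a‖ ≤ L0 * (‖x₁ - x₂‖ + ‖y₁ - y₂‖))
    (hfBdd : ∀ x y, ∀ a ∈ A, ‖f x y a‖ ≤ Q0)
    (hctrl : ∀ K : Set (Euc N × Euc M), IsCompact K → ∃ r > 0, ∀ z ∈ K,
      Metric.ball (0 : Euc M) r ⊆ closure (convexHull ℝ ((fun a => g z.1 z.2 a) '' A)))
 :
    ∀ R1 R2 : ℝ, 0 < R1 → 0 < R2 →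
      ∃ T0 > (0:ℝ), ∃ P > (0:ℝ), ∀ (x : Euc N) (y z : Euc M) (ε : ℝ),
        ‖x‖ < R1 → ‖y‖ < R2 → ‖z‖ < R2 → 0 < ε → ε ≤ 1 →
        ∃ (α : ℝ → Euc k) (ξ : ℝ → Euc N) (η : ℝ → Euc M) (T : ℝ),
          IsControl A α ∧ IsTrajectory f g ε α ξ η ∧ ξ 0 = x ∧ η 0 = y ∧
          T0 < T ∧ T < 3 * T0 ∧ ‖η T - z‖ ≤ P * ε := by
  intro R1 R2 hR1 hR2
  obtain ⟨r1, hr1, h1⟩ := aux_track A hAne f g L0 Q0 hL0 hQ0 hfLip hgLip hfBdd hctrl (R1 + 1) (R2 + 1)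
  set T0 : ℝ := R2 / r1 with hT0
  have hT0p : 0 < T0 := by positivity
  obtain ⟨r2, hr2, h2⟩ := aux_track A hAne f g L0 Q0 hL0 hQ0 hfLip hgLip hfBdd hctrl
    (R1 + Q0 * (2 * T0)) (R2 + 1)
  refine ⟨T0, hT0p, 1 + (1 + 2 * R2) * (Q0 * (2 * T0)), by positivity, ?_⟩
  intro x y z ε hx hy hz hε hε1
  have hTp : 0 < 2 * T0 := by positivity
  by_cases hc : ε * Q0 * (2 * T0) ≤ 1
  · have hvr : ‖(2 * T0)⁻¹ • (z - y)‖ ≤ r1 := by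
      rw [norm_smul, norm_inv, Real.norm_eq_abs, abs_of_pos hTp, inv_mul_le_iff₀ hTp]
      have e1 : 2 * T0 * r1 = 2 * R2 := by rw [hT0]; field_simp
      rw [e1]
      have := norm_sub_le z y
      linarith
    obtain ⟨α, ξ, η, hα, htr, hξ0, hη0, hfin⟩ := h1 x y ((2 * T0)⁻¹ • (z - y)) ε (2 * T0) ε hε hε1
      hTp hε hε1 hvr (by linarith) (by
        intro t ht
        have hs : t * (2 * T0)⁻¹ ≤ 1 := by
          rw [← div_eq_mul_inv, div_le_one hTp]; exact ht.2
        have hs0 : 0 ≤ t * (2 * T0)⁻¹ := mul_nonneg ht.1 (by positivity)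
        set s := t * (2 * T0)⁻¹ with hsd
        have e1 : y + t • (2 * T0)⁻¹ • (z - y) = (1 - s) • y + s • z := by
          rw [smul_smul, ← hsd]; module
        rw [e1]
        have e2 := norm_add_le ((1 - s) • y) (s • z)
        rw [norm_smul, norm_smul, Real.norm_eq_abs, Real.norm_eq_abs, abs_of_nonneg hs0,
          abs_of_nonneg (by linarith : (0:ℝ) ≤ 1 - s)] at e2
        nlinarith)
    refine ⟨α, ξ, η, 2 * T0, hα, htr, hξ0, hη0, by linarith, by linarith, ?_⟩
    have e1 : y + (2 * T0) • (2 * T0)⁻¹ • (z - y) = z := by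
      rw [smul_inv_smul₀ hTp.ne']; abel
    rw [e1] at hfin
    have : 0 ≤ (1 + 2 * R2) * (Q0 * (2 * T0)) := by positivity
    nlinarith
  · push Not at hc
    obtain ⟨α, ξ, η, hα, htr, hξ0, hη0, hfin⟩ := h2 x y 0 ε (2 * T0) 1 hε hε1
      hTp one_pos le_rfl (by simpa using hr2.le) (by
        have : ε * (Q0 * (2 * T0)) ≤ 1 * (Q0 * (2 * T0)) := by gcongr
        linarith) (by
        intro t ht
        simp only [smul_zero, add_zero]
        linarith)
    refine ⟨α, ξ, η, 2 * T0, hα, htr, hξ0, hη0, by linarith, by linarith, ?_⟩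
    simp only [smul_zero, add_zero] at hfin
    have e1 : ‖η (2 * T0) - z‖ ≤ 1 + 2 * R2 := by
      have e2 : η (2 * T0) - z = (η (2 * T0) - y) + (y - z) := by abel
      rw [e2]
      have e3 := norm_add_le (η (2 * T0) - y) (y - z)
      have e4 := norm_sub_le y z
      linarith
    have e5 : (1 + 2 * R2) * 1 ≤ (1 + 2 * R2) * (ε * Q0 * (2 * T0)) := by gcongr
    nlinarith
end
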